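/- Let Ω ⊂ ℂⁿ, n ≥ 2, be a bounded pseudoconvex domain with C^∞ boundary, and let p ∈ ∂Ω be a strongly pseudoconvex boundary point. Let F be an automorphism of Ω with F(z) = z + o(‖z−p‖²) as z → p within Ω. Then F(z) = z for all z ∈ Ω. -/

import Mathlib

open Complex Topology Filter Metric Set Function

noncomputable section

/-- `ℂⁿ` as a normed space. -/
abbrev En (n : ℕ) : Type := EuclideanSpace ℂ (Fin n)

/-- A domain: a nonempty open connected set. -/
def IsDomain' {n : ℕ} (Ω : Set (En n)) : Prop :=
  IsOpen Ω ∧ IsConnected Ω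

/-- The Levi form of `ρ` at `q` in direction `ξ`:
`(1/4)(H_q(ξ,ξ) + H_q(iξ,iξ))` with `H_q` the second real Fréchet derivative. -/
def LeviForm {n : ℕ} (ρ : En n → ℝ) (q ξ : En n) : ℝ :=
  (1 / 4) * (iteratedFDeriv ℝ 2 ρ q ![ξ, ξ] + iteratedFDeriv ℝ 2 ρ q ![I • ξ, I • ξ])

/-- `ξ` lies in the complex tangent space of `{ρ = 0}` at `q`. -/
def InCplxTangent {n : ℕ} (ρ : En n → ℝ) (q ξ : En n) : Prop :=
  fderiv ℝ ρ q ξ = 0 ∧ fderiv ℝ ρ q (I • ξ) = 0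

/-- `ρ` is a `C^m` defining function for `Ω`. -/
def IsDefiningFunction {n : ℕ} (Ω : Set (En n)) (m : ℕ∞) (ρ : En n → ℝ) : Prop :=
  ContDiff ℝ m ρ ∧ Ω = {z | ρ z < 0} ∧ frontier Ω = {z | ρ z = 0} ∧
    ∀ q ∈ frontier Ω, fderiv ℝ ρ q ≠ 0

/-- `q` is a strongly pseudoconvex point with respect to `ρ`. -/
def StronglyPcxAt {n : ℕ} (ρ : En n → ℝ) (q : En n) : Prop :=
  ∀ ξ : En n, ξ ≠ 0 → InCplxTangent ρ q ξ → 0 < LeviForm ρ q ξ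

/-- `Ω` is pseudoconvex with `C^∞` boundary, witnessed by the defining function `ρ`. -/
def IsPcxCinfBoundary {n : ℕ} (Ω : Set (En n)) (ρ : En n → ℝ) : Prop :=
  IsDefiningFunction Ω ⊤ ρ ∧
    ∀ q ∈ frontier Ω, ∀ ξ : En n, InCplxTangent ρ q ξ → 0 ≤ LeviForm ρ q ξ

/-- `F z = z + o(‖z - p‖^k)` as `z → p` within `Ω`. -/
def LittleOh {n : ℕ} (Ω : Set (En n)) (F : En n → En n) (p : En n) (k : ℕ) : Prop :=
  Tendsto (fun z => ‖F z - z‖ / ‖z - p‖ ^ k) (𝓝[Ω] p) (𝓝 0)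

/-- `F` is an automorphism of `Ω`: a holomorphic bijection with holomorphic inverse. -/
def IsAutomorphismOf {n : ℕ} (F : En n → En n) (Ω : Set (En n)) : Prop :=
  DifferentiableOn ℂ F Ω ∧ MapsTo F Ω Ω ∧
    ∃ G : En n → En n, DifferentiableOn ℂ G Ω ∧ MapsTo G Ω Ω ∧
      (∀ z ∈ Ω, G (F z) = z) ∧ (∀ z ∈ Ω, F (G z) = z)

section CircleAverages

variable {E : Type*} [NormedAddCommGroup E] [InnerProductSpace ℂ E] [CompleteSpace E]

theorem DifferentiableOn.diffContOnCl_ball_of_closedBall {F : Type*} [NormedAddCommGroup F]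
    [NormedSpace ℂ F] {U : Set ℂ} {f : ℂ → F} {c : ℂ} {R : ℝ}
    (hf : DifferentiableOn ℂ f U) (hU : closedBall c |R| ⊆ U) :
    DiffContOnCl ℂ f (ball c |R|) :=
  (hf.mono (closure_ball_subset_closedBall.trans hU)).diffContOnCl

theorem circleAverage_re_eq {U : Set ℂ} {f : ℂ → ℂ} {c : ℂ} {R : ℝ}
    (hf : DifferentiableOn ℂ f U) (hU : closedBall c |R| ⊆ U) :
    Real.circleAverage (fun z => (f z).re) c R = (f c).re := by
  have h1 : CircleIntegrable f c R :=
    (hf.continuousOn.mono (sphere_subset_closedBall.trans hU)).circleIntegrable'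
  have := Complex.reCLM.circleAverage_comp_comm h1
  rw [(hf.diffContOnCl_ball_of_closedBall hU).circleAverage] at this
  exact this

/-- Pythagoras on circles. -/
theorem circleAverage_norm_sq_sub {U : Set ℂ} {f : ℂ → E} {c : ℂ} {R : ℝ}
    (hf : DifferentiableOn ℂ f U) (hU : closedBall c |R| ⊆ U) (b : E) :
    Real.circleAverage (fun z => ‖f z - b‖ ^ 2) c R
      = Real.circleAverage (fun z => ‖f z‖ ^ 2) c R - 2 * (inner ℂ b (f c)).re + ‖b‖ ^ 2 := by
  have hc : ContinuousOn f (sphere c |R|) :=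
    hf.continuousOn.mono (sphere_subset_closedBall.trans hU)
  have hg : DifferentiableOn ℂ (fun z => inner ℂ b (f z)) U :=
    (innerSL ℂ b).differentiable.comp_differentiableOn hf
  have hcg := hg.continuousOn.mono (sphere_subset_closedBall.trans hU)
  have h0 := circleAverage_re_eq hg hU
  have e : (fun z => ‖f z - b‖ ^ 2) =
      fun z => (‖f z‖ ^ 2 + (-2 : ℝ) • (inner ℂ b (f z)).re) + ‖b‖ ^ 2 := by
    ext z
    have h1 : (inner ℂ (f z) b).re = (inner ℂ b (f z)).re := by
      rw [← inner_conj_symm, Complex.conj_re]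
    rw [@norm_sub_sq ℂ]
    simp only [RCLike.re_eq_complex_re, h1, smul_eq_mul]
    ring
  have i1 : CircleIntegrable (fun z => ‖f z‖ ^ 2) c R := (hc.norm.pow 2).circleIntegrable'
  have i2 : CircleIntegrable (fun z => (-2 : ℝ) • (inner ℂ b (f z)).re) c R :=
    ((Complex.continuous_re.comp_continuousOn hcg).const_smul (-2 : ℝ)).circleIntegrable'
  have i3 : CircleIntegrable (fun z => ‖f z‖ ^ 2 + (-2 : ℝ) • (inner ℂ b (f z)).re) c R :=
    i1.add i2
  rw [e, Real.circleAverage_fun_add i3 (circleIntegrable_const _ _ _),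
    Real.circleAverage_fun_add i1 i2, Real.circleAverage_fun_smul, h0, Real.circleAverage_const]
  simp
  ring

theorem circleAverage_norm_sq_sub_center {U : Set ℂ} {f : ℂ → E} {c : ℂ} {R : ℝ}
    (hf : DifferentiableOn ℂ f U) (hU : closedBall c |R| ⊆ U) :
    Real.circleAverage (fun z => ‖f z - f c‖ ^ 2) c R
      = Real.circleAverage (fun z => ‖f z‖ ^ 2) c R - ‖f c‖ ^ 2 := by
  rw [circleAverage_norm_sq_sub hf hU, inner_self_eq_norm_sq_to_K]
  have : ((‖f c‖ : ℂ) ^ 2).re = ‖f c‖ ^ 2 := by norm_cast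
  simp only [coe_algebraMap, this]
  ring

theorem norm_sq_le_circleAverage {U : Set ℂ} {f : ℂ → E} {c : ℂ} {R : ℝ}
    (hf : DifferentiableOn ℂ f U) (hU : closedBall c |R| ⊆ U) :
    ‖f c‖ ^ 2 ≤ Real.circleAverage (fun z => ‖f z‖ ^ 2) c R := by
  have := circleAverage_norm_sq_sub_center hf hU
  have h2 : 0 ≤ Real.circleAverage (fun z => ‖f z - f c‖ ^ 2) c R :=
    Real.circleAverage_nonneg_of_nonneg fun z _ => by positivity
  linarith

theorem norm_circleAverage_le {E : Type*} [NormedAddCommGroup E] [NormedSpace ℝ E]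
    {f : ℂ → E} {g : ℂ → ℝ} {c : ℂ} {R : ℝ}
    (hg : CircleIntegrable g c R) (h : ∀ z ∈ sphere c |R|, ‖f z‖ ≤ g z) :
    ‖Real.circleAverage f c R‖ ≤ Real.circleAverage g c R := by
  rw [Real.circleAverage_def, Real.circleAverage_def, norm_smul, smul_eq_mul,
    Real.norm_of_nonneg (by positivity)]
  gcongr
  refine intervalIntegral.norm_integral_le_of_norm_le (by positivity) ?_ hg
  exact Filter.Eventually.of_forall fun t _ => h _ (circleMap_mem_sphere' _ _ _)

/-- Crude interior bound by the mean square on the unit circle. -/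
theorem norm_sq_le_four_mul_circleAverage {U : Set ℂ} {f : ℂ → E}
    (hf : DifferentiableOn ℂ f U) (hU : closedBall (0 : ℂ) 1 ⊆ U) {w : ℂ} (hw : ‖w‖ ≤ 1 / 2) :
    ‖f w‖ ^ 2 ≤ 4 * Real.circleAverage (fun z => ‖f z‖ ^ 2) 0 1 := by
  have hU' : closedBall (0 : ℂ) |1| ⊆ U := by simpa using hU
  have hc : ContinuousOn f (sphere 0 |1|) :=
    hf.continuousOn.mono (sphere_subset_closedBall.trans hU')
  have h1 := (hf.diffContOnCl_ball_of_closedBall hU').circleAverage_smul_div (w := w)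
    (by simp; linarith)
  by_cases h0 : ‖f w‖ = 0
  · rw [h0]
    have : 0 ≤ Real.circleAverage (fun z => ‖f z‖ ^ 2) 0 1 :=
      Real.circleAverage_nonneg_of_nonneg fun z _ => by positivity
    nlinarith
  have hpos : 0 < ‖f w‖ := lt_of_le_of_ne (norm_nonneg _) (Ne.symm h0)
  set t := ‖f w‖ with ht
  have i1 : CircleIntegrable (fun z => ‖f z‖ ^ 2) 0 1 := (hc.norm.pow 2).circleIntegrable'
  have i2 : CircleIntegrable (fun z => (2 / t) • ‖f z‖ ^ 2) 0 1 := i1.const_smul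
  have key : ‖Real.circleAverage (fun z ↦ ((z - 0) / (z - w)) • f z) 0 1‖ ≤
      Real.circleAverage (fun z => (2 / t) • ‖f z‖ ^ 2 + t / 2) 0 1 := by
    apply norm_circleAverage_le
    · exact i2.add (circleIntegrable_const _ _ _)
    · intro z hz
      have hz1 : ‖z‖ = 1 := by simpa using hz
      have hzw : 1 / 2 ≤ ‖z - w‖ := by
        have := norm_sub_norm_le z w
        linarith
      rw [norm_smul, norm_div, sub_zero, hz1]
      have h2 : 1 / ‖z - w‖ ≤ 2 := by
        rw [div_le_iff₀ (by linarith)]; linarith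
      calc 1 / ‖z - w‖ * ‖f z‖ ≤ 2 * ‖f z‖ := by gcongr
        _ ≤ _ := by
          rw [smul_eq_mul, ← sub_nonneg]
          have : 2 / t * ‖f z‖ ^ 2 + t / 2 - 2 * ‖f z‖ = 2 / t * (‖f z‖ - t / 2) ^ 2 := by
            field_simp; ring
          rw [this]; positivity
  rw [h1, Real.circleAverage_fun_add i2 (circleIntegrable_const _ _ _),
    Real.circleAverage_fun_smul, Real.circleAverage_const, ← ht, smul_eq_mul] at key
  have : t / 2 ≤ 2 / t * Real.circleAverage (fun z => ‖f z‖ ^ 2) 0 1 := by linarith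
  rw [div_mul_eq_mul_div, le_div_iff₀ hpos] at this
  nlinarith

/-- The derivative at the centre of the unbounded part of a disc nearly preserving
`Re z - ‖a‖²` is determined up to a bounded error. -/
theorem norm_sq_deriv_near_of_height_near {U : Set ℂ} (hUo : IsOpen U)
    (hU : closedBall (0 : ℂ) 1 ⊆ U)
    {P : ℂ → E} {f : ℂ → ℂ} (hP : DifferentiableOn ℂ P U) (hf : DifferentiableOn ℂ f U)
    {a u : E} {z v : ℂ} {C : ℝ}
    (h : ∀ ζ ∈ closedBall (0 : ℂ) 1,
      |((f ζ).re - ‖P ζ‖ ^ 2) - ((z + ζ * v).re - ‖a + ζ • u‖ ^ 2)| ≤ C) :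
    |‖deriv P 0‖ ^ 2 - ‖u‖ ^ 2| ≤ 50 * C := by
  have hC : 0 ≤ C := (abs_nonneg _).trans (h 0 (by simp))
  have h0U : U ∈ 𝓝 (0 : ℂ) := hUo.mem_nhds (hU (by simp))
  set r := dslope P 0 with hr
  have hrd : DifferentiableOn ℂ r U := (Complex.differentiableOn_dslope h0U).2 hP
  have hr0 : r 0 = deriv P 0 := dslope_same _ _
  set s := dslope r 0 with hs
  have hsd : DifferentiableOn ℂ s U := (Complex.differentiableOn_dslope h0U).2 hrd
  have hPr : ∀ ζ, P ζ - P 0 = ζ • r ζ := fun ζ => by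
    have := sub_smul_dslope P 0 ζ
    simpa using this.symm
  have hrs : ∀ ζ, r ζ - r 0 = ζ • s ζ := fun ζ => by
    have := sub_smul_dslope r 0 ζ
    simpa using this.symm
  -- mean square of `r`
  have hB : ∀ R : ℝ, 0 < R → R ≤ 1 →
      |R ^ 2 * Real.circleAverage (fun ζ => ‖r ζ‖ ^ 2) 0 R - R ^ 2 * ‖u‖ ^ 2| ≤ 2 * C := by
    intro R hR hR1
    have habs : |R| = R := abs_of_pos hR
    have hsub : closedBall (0 : ℂ) |R| ⊆ closedBall 0 1 := by
      rw [habs]; exact closedBall_subset_closedBall hR1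
    have hUR : closedBall (0 : ℂ) |R| ⊆ U := hsub.trans hU
    have hss : sphere (0 : ℂ) |R| ⊆ U := sphere_subset_closedBall.trans hUR
    have eA : Real.circleAverage (fun ζ => ‖P ζ‖ ^ 2) 0 R
        = R ^ 2 * Real.circleAverage (fun ζ => ‖r ζ‖ ^ 2) 0 R + ‖P 0‖ ^ 2 := by
      have h1 := circleAverage_norm_sq_sub_center hP hUR
      have h2 : Real.circleAverage (fun z => ‖P z - P 0‖ ^ 2) 0 R
          = Real.circleAverage (fun ζ => (R ^ 2) • ‖r ζ‖ ^ 2) 0 R := by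
        apply Real.circleAverage_congr_sphere
        intro ζ hζ
        have : ‖ζ‖ = R := by simpa [habs] using hζ
        simp only [hPr, norm_smul, this, mul_pow, smul_eq_mul]
      rw [h2, Real.circleAverage_fun_smul, smul_eq_mul] at h1
      linarith
    have hLd : DifferentiableOn ℂ (fun ζ : ℂ => a + ζ • u) univ := by fun_prop
    have eL : Real.circleAverage (fun ζ : ℂ => ‖a + ζ • u‖ ^ 2) 0 R
        = R ^ 2 * ‖u‖ ^ 2 + ‖a‖ ^ 2 := by
      have h1 := circleAverage_norm_sq_sub_center (c := 0) (R := R) hLd (subset_univ _)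
      have h2 : Real.circleAverage (fun ζ : ℂ => ‖(a + ζ • u) - (a + (0 : ℂ) • u)‖ ^ 2) 0 R
          = Real.circleAverage (fun ζ => R ^ 2 * ‖u‖ ^ 2) 0 R := by
        apply Real.circleAverage_congr_sphere
        intro ζ hζ
        have : ‖ζ‖ = R := by simpa [habs] using hζ
        simp [norm_smul, this, mul_pow]
      rw [h2, Real.circleAverage_const] at h1
      simp at h1
      linarith
    have cP : ContinuousOn (fun ζ => ‖P ζ‖ ^ 2) (sphere 0 |R|) :=
      (hP.continuousOn.mono hss).norm.pow 2
    have cf : ContinuousOn (fun ζ => (f ζ).re) (sphere 0 |R|) :=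
      Complex.continuous_re.comp_continuousOn (hf.continuousOn.mono hss)
    have cL : ContinuousOn (fun ζ : ℂ => ‖a + ζ • u‖ ^ 2) (sphere 0 |R|) := by fun_prop
    have cz : ContinuousOn (fun ζ : ℂ => (z + ζ * v).re) (sphere 0 |R|) := by
      exact Complex.continuous_re.comp_continuousOn (by fun_prop)
    have ez : Real.circleAverage (fun ζ : ℂ => (z + ζ * v).re) 0 R = z.re := by
      have := circleAverage_re_eq (f := fun ζ : ℂ => z + ζ * v) (U := univ) (c := 0) (R := R)
        (by fun_prop) (subset_univ _)
      simpa using this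
    have ef := circleAverage_re_eq hf hUR
    have eT : Real.circleAverage
        (fun ζ : ℂ => ((f ζ).re - ‖P ζ‖ ^ 2) - ((z + ζ * v).re - ‖a + ζ • u‖ ^ 2)) 0 R
        = ((f 0).re - (R ^ 2 * Real.circleAverage (fun ζ => ‖r ζ‖ ^ 2) 0 R + ‖P 0‖ ^ 2))
          - (z.re - (R ^ 2 * ‖u‖ ^ 2 + ‖a‖ ^ 2)) := by
      have i1 : CircleIntegrable (fun ζ => (f ζ).re - ‖P ζ‖ ^ 2) 0 R :=
        (cf.sub cP).circleIntegrable'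
      have i2 : CircleIntegrable (fun ζ : ℂ => (z + ζ * v).re - ‖a + ζ • u‖ ^ 2) 0 R :=
        (cz.sub cL).circleIntegrable'
      rw [Real.circleAverage_fun_sub i1 i2,
        Real.circleAverage_fun_sub cf.circleIntegrable' cP.circleIntegrable',
        Real.circleAverage_fun_sub cz.circleIntegrable' cL.circleIntegrable', ef, eA, ez, eL]
    have bT : ‖Real.circleAverage
        (fun ζ : ℂ => ((f ζ).re - ‖P ζ‖ ^ 2) - ((z + ζ * v).re - ‖a + ζ • u‖ ^ 2)) 0 R‖ ≤ C := by
      have h3 := Real.abs_circleAverage_le_circleAverage_abs (c := 0) (R := R) (f :=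
        fun ζ : ℂ => ((f ζ).re - ‖P ζ‖ ^ 2) - ((z + ζ * v).re - ‖a + ζ • u‖ ^ 2))
      refine h3.trans (Real.circleAverage_mono_on_of_le_circle ?_ ?_)
      · exact ((cf.sub cP).sub (cz.sub cL)).abs.circleIntegrable'
      · intro ζ hζ
        exact h ζ (hsub (sphere_subset_closedBall hζ))
    rw [eT, Real.norm_eq_abs] at bT
    have b0 := h 0 (by simp)
    simp only [zero_mul, add_zero, zero_smul] at b0
    rw [abs_le] at bT b0 ⊢
    constructor <;> linarith [bT.1, bT.2, b0.1, b0.2]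
  have hUn : ∀ R : ℝ, 0 < R → R ≤ 1 → closedBall (0 : ℂ) |R| ⊆ U := fun R h1 h2 => by
    rw [abs_of_pos h1]; exact (closedBall_subset_closedBall h2).trans hU
  have hB1 := hB 1 one_pos le_rfl
  have hB4 := hB (1 / 4) (by norm_num) (by norm_num)
  have c1 := circleAverage_norm_sq_sub_center hrd (hUn 1 one_pos le_rfl)
  have c4 := circleAverage_norm_sq_sub_center hrd (hUn (1 / 4) (by norm_num) (by norm_num))
  have d1 : Real.circleAverage (fun z => ‖r z - r 0‖ ^ 2) 0 1
      = Real.circleAverage (fun z => ‖s z‖ ^ 2) 0 1 := by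
    apply Real.circleAverage_congr_sphere
    intro ζ hζ
    have : ‖ζ‖ = 1 := by simpa using hζ
    simp only [hrs, norm_smul, this, one_mul]
  have d4 : Real.circleAverage (fun z => ‖r z - r 0‖ ^ 2) 0 (1 / 4)
      ≤ 1 / 4 * Real.circleAverage (fun z => ‖s z‖ ^ 2) 0 1 := by
    apply Real.circleAverage_mono_on_of_le_circle
    · refine ContinuousOn.circleIntegrable' (((hrd.continuousOn.mono ?_).sub
        continuousOn_const).norm.pow 2)
      exact sphere_subset_closedBall.trans (hUn _ (by norm_num) (by norm_num))
    · intro ζ hζ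
      have h4 : ‖ζ‖ = 1 / 4 := by
        rw [mem_sphere_zero_iff_norm, abs_of_pos (by norm_num)] at hζ; exact hζ
      have := norm_sq_le_four_mul_circleAverage hsd hU (w := ζ) (by rw [h4]; norm_num)
      rw [hrs, norm_smul, mul_pow, h4]
      linarith
  have n1 := norm_sq_le_circleAverage hrd (hUn 1 one_pos le_rfl)
  rw [← hr0]
  rw [abs_le] at hB1 hB4 ⊢
  constructor <;> linarith [hB1.1, hB1.2, hB4.1, hB4.2]

end CircleAverages

section SiegelModel

variable {E : Type*} [NormedAddCommGroup E] [InnerProductSpace ℂ E]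

/-- Height function `Re z - ‖a‖²` of the Siegel model. -/
def siegelHeight (Z : E × ℂ) : ℝ := Z.2.re - ‖Z.1‖ ^ 2

/-- Superlevel set of the height function (a horoball of the Siegel model). -/
def horoball (E : Type*) [NormedAddCommGroup E] (T : ℝ) : Set (E × ℂ) :=
  {Z | T < Z.2.re - ‖Z.1‖ ^ 2}

theorem continuous_siegelHeight : Continuous (siegelHeight : E × ℂ → ℝ) := by
  unfold siegelHeight
  exact (Complex.continuous_re.comp continuous_snd).sub (continuous_fst.norm.pow 2)

theorem isOpen_horoball (T : ℝ) : IsOpen (horoball E T) :=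
  isOpen_lt continuous_const (continuous_siegelHeight (E := E))

/-- `G` tends to the identity as `Re z → ∞` with bounded first coordinate. -/
def AsymptoticToId (G : E × ℂ → E × ℂ) : Prop :=
  ∀ A : ℝ, ∀ ε > 0, ∃ R : ℝ, ∀ (a : E) (z : ℂ), ‖a‖ ≤ A → R ≤ z.re → ‖G (a, z) - (a, z)‖ ≤ ε

/-- `G` is holomorphic on a horoball and changes the height by at most `C` there. -/
structure NearlyHeightPreserving (T C : ℝ) (G : E × ℂ → E × ℂ) : Prop where
  differentiableOn : DifferentiableOn ℂ G (horoball E T)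
  height_near : ∀ Z ∈ horoball E T, |siegelHeight (G Z) - siegelHeight Z| ≤ C

theorem mem_horoball_of_re_ge {T : ℝ} {a : E} {z : ℂ} (ha : ‖a‖ ≤ 1) (h16 : 16 ≤ z.re)
    (hT : 2 * T < z.re) : (a, z) ∈ horoball E T := by
  simp only [horoball, mem_ofPred_eq]
  nlinarith [norm_nonneg a]

namespace NearlyHeightPreserving

variable {T C : ℝ} {G : E × ℂ → E × ℂ}

theorem nonneg (hG : NearlyHeightPreserving T C G) : 0 ≤ C := by
  refine (abs_nonneg _).trans (hG.height_near (0, ((T + 1 : ℝ) : ℂ)) ?_)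
  simp [horoball]

theorem differentiableAt (hG : NearlyHeightPreserving T C G) {Z : E × ℂ}
    (hZ : Z ∈ horoball E T) : DifferentiableAt ℂ G Z :=
  (hG.differentiableOn Z hZ).differentiableAt ((isOpen_horoball T).mem_nhds hZ)

theorem norm_sq_fderiv_near [CompleteSpace E] (hG : NearlyHeightPreserving T C G) {a u : E}
    {z v : ℂ} (ha : ‖a‖ ≤ 1) (h16 : 16 ≤ z.re) (hT : 2 * T < z.re) (hu : ‖u‖ ≤ √z.re / 4)
    (hv : ‖v‖ ≤ z.re / 4) :
    |‖(fderiv ℂ G (a, z) (u, v)).1‖ ^ 2 - ‖u‖ ^ 2| ≤ 50 * C := by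
  set l : ℂ → E × ℂ := fun ζ => (a + ζ • u, z + ζ * v) with hl
  have hld : Differentiable ℂ l := by
    rw [hl]; fun_prop
  have hlc : ∀ ζ ∈ closedBall (0 : ℂ) 1, l ζ ∈ horoball E T := by
    intro ζ hζ
    have hζ1 : ‖ζ‖ ≤ 1 := by simpa using hζ
    simp only [hl, horoball, mem_ofPred_eq, add_re]
    have h1 : ‖ζ * v‖ ≤ z.re / 4 := by
      rw [norm_mul]; nlinarith [norm_nonneg v, norm_nonneg ζ]
    have h2 : ‖a + ζ • u‖ ≤ 1 + √z.re / 4 := by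
      refine (norm_add_le _ _).trans (add_le_add ha ?_)
      rw [norm_smul]; nlinarith [norm_nonneg u, norm_nonneg ζ]
    have h3 := (abs_le.1 ((Complex.abs_re_le_norm (ζ * v)).trans h1)).1
    have h4 : √z.re ^ 2 = z.re := Real.sq_sqrt (by linarith)
    have h5 : ‖a + ζ • u‖ ^ 2 ≤ (1 + √z.re / 4) ^ 2 := by gcongr
    have h6 : (1 + √z.re / 4) ^ 2 ≤ 2 + z.re / 8 := by nlinarith [sq_nonneg (1 - √z.re / 4)]
    linarith
  set U : Set ℂ := l ⁻¹' horoball E T with hU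
  have hUo : IsOpen U := (isOpen_horoball T).preimage hld.continuous
  have hGl : DifferentiableOn ℂ (fun ζ => G (l ζ)) U :=
    hG.differentiableOn.comp hld.differentiableOn (fun ζ hζ => hζ)
  have key := norm_sq_deriv_near_of_height_near hUo hlc (P := fun ζ => (G (l ζ)).1)
    (f := fun ζ => (G (l ζ)).2) (a := a) (u := u) (z := z) (v := v) (C := C)
    (differentiable_fst.comp_differentiableOn hGl) (differentiable_snd.comp_differentiableOn hGl)
    (fun ζ hζ => hG.height_near (l ζ) (hlc ζ hζ))
  have hl0 : l 0 = (a, z) := by simp [hl]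
  have hd : HasDerivAt l (u, v) 0 := by
    have h1 : HasDerivAt (fun ζ : ℂ => a + ζ • u) u 0 := by
      simpa using ((hasDerivAt_id (0 : ℂ)).smul_const u).const_add a
    have h2 : HasDerivAt (fun ζ : ℂ => z + ζ * v) v 0 := by
      simpa using ((hasDerivAt_id (0 : ℂ)).mul_const v).const_add z
    exact h1.prodMk h2
  have hGd : HasFDerivAt G (fderiv ℂ G (a, z)) (l 0) := by
    rw [hl0]
    exact (hG.differentiableAt (hl0 ▸ hlc 0 (by simp))).hasFDerivAt
  have h1 := (hGd.comp_hasDerivAt (0 : ℂ) hd)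
  have h2 : HasDerivAt (fun ζ => (G (l ζ)).1) (fderiv ℂ G (a, z) (u, v)).1 0 :=
    (ContinuousLinearMap.fst ℂ E ℂ).hasFDerivAt.comp_hasDerivAt (0 : ℂ) h1
  rwa [h2.deriv] at key

theorem norm_fst_fderiv_vertical_le [FiniteDimensional ℂ E] (hG : NearlyHeightPreserving T C G)
    {a : E} {z : ℂ} (ha : ‖a‖ ≤ 1) (h16 : 16 ≤ z.re) (hT : 2 * T < z.re)
    (hC : 1600 * C < z.re) :
    ‖(fderiv ℂ G (a, z) (0, 1)).1‖ ≤ 800 * C / (z.re * √z.re) := by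
  have : CompleteSpace E := FiniteDimensional.complete ℂ E
  have hx : 0 < z.re := by linarith
  have hs : 0 < √z.re := Real.sqrt_pos.2 hx
  have hss : √z.re ^ 2 = z.re := Real.sq_sqrt hx.le
  have hC0 := hG.nonneg
  set L := fderiv ℂ G (a, z) with hL
  set k := (L (0, 1)).1 with hk
  by_cases hk0 : k = 0
  · rw [hk0, norm_zero]; positivity
  let P : E →ₗ[ℂ] E := LinearMap.fst ℂ E ℂ ∘ₗ L.toLinearMap ∘ₗ LinearMap.inl ℂ E ℂ
  have hP : ∀ u, P u = (L (u, 0)).1 := fun u => rfl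
  have hlow : ∀ u : E, ‖u‖ / 2 ≤ ‖P u‖ := by
    intro u
    by_cases hu : u = 0
    · simp [hu]
    have hun : 0 < ‖u‖ := norm_pos_iff.2 hu
    set c : ℝ := √z.re / 4 / ‖u‖ with hc
    have hcpos : 0 < c := by positivity
    have hcu : ‖(c : ℂ) • u‖ = √z.re / 4 := by
      rw [norm_smul, Complex.norm_of_nonneg hcpos.le, hc]; field_simp
    have h1 := hG.norm_sq_fderiv_near (u := (c : ℂ) • u) (v := 0) ha h16 hT hcu.le
      (by rw [norm_zero]; positivity)
    rw [← hL, ← hP, map_smul, hcu, norm_smul, Complex.norm_of_nonneg hcpos.le, abs_le] at h1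
    have h2 : (c * (‖u‖ / 2)) ^ 2 ≤ (c * ‖P u‖) ^ 2 := by
      have : c * (‖u‖ / 2) = √z.re / 8 := by rw [hc]; field_simp; norm_num
      rw [this]
      nlinarith [h1.1]
    exact le_of_mul_le_mul_left (le_of_sq_le_sq h2 (by positivity)) hcpos
  have hinj : Function.Injective P := by
    rw [injective_iff_map_eq_zero]
    intro u hu
    have := hlow u
    rw [hu, norm_zero] at this
    exact norm_le_zero_iff.1 (by linarith)
  obtain ⟨u0, hu0⟩ := (LinearMap.injective_iff_surjective.1 hinj) k
  have hu0n : u0 ≠ 0 := by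
    rintro rfl
    exact hk0 (by rw [← hu0, map_zero])
  have ht : 0 < ‖u0‖ := norm_pos_iff.2 hu0n
  set c : ℝ := √z.re / 4 / ‖u0‖ with hc
  have hcpos : 0 < c := by positivity
  have hcu : ‖(c : ℂ) • u0‖ = √z.re / 4 := by
    rw [norm_smul, Complex.norm_of_nonneg hcpos.le, hc]; field_simp
  have hx4 : ‖((z.re / 4 : ℝ) : ℂ)‖ = z.re / 4 := Complex.norm_of_nonneg (by positivity)
  have hval : ∀ v : ℝ, (L ((c : ℂ) • u0, (v : ℂ))).1 = ((c + v : ℝ) : ℂ) • k := by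
    intro v
    have : ((c : ℂ) • u0, (v : ℂ)) = (c : ℂ) • (u0, (0 : ℂ)) + (v : ℂ) • ((0 : E), (1 : ℂ)) := by
      simp
    rw [this, map_add, map_smul, map_smul, Prod.fst_add, Prod.smul_fst, Prod.smul_fst, ← hP, hu0,
      ← hk, ← add_smul]
    push_cast; rfl
  have h1 := hG.norm_sq_fderiv_near (u := (c : ℂ) • u0) (v := ((z.re / 4 : ℝ) : ℂ)) ha h16 hT hcu.le
    hx4.le
  have h2 := hG.norm_sq_fderiv_near (u := (c : ℂ) • u0) (v := ((-(z.re / 4) : ℝ) : ℂ)) ha h16 hT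
    hcu.le (by rw [ofReal_neg, norm_neg]; exact hx4.le)
  rw [← hL, hval, norm_smul, mul_pow, Complex.norm_real, Real.norm_eq_abs, sq_abs, abs_le] at h1 h2
  have h3 : c * z.re * ‖k‖ ^ 2 ≤ 100 * C := by nlinarith [h1.2, h2.1]
  have h4 := hlow u0
  rw [hu0] at h4
  have h5 : c * ‖u0‖ = √z.re / 4 := by rw [hc]; field_simp
  rw [le_div_iff₀ (by positivity)]
  have h6 : c * ‖u0‖ / 2 ≤ c * ‖k‖ := by nlinarith
  have h7 : √z.re / 8 * (z.re * ‖k‖) ≤ c * ‖k‖ * (z.re * ‖k‖) := by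
    apply mul_le_mul_of_nonneg_right _ (by positivity)
    linarith
  nlinarith

theorem norm_fst_sub_le [FiniteDimensional ℂ E] (hG : NearlyHeightPreserving T C G)
    (hA : AsymptoticToId G) {a : E} {z : ℂ} (ha : ‖a‖ ≤ 1) (h16 : 16 ≤ z.re) (hT : 2 * T < z.re)
    (hC : 1600 * C < z.re) :
    ‖(G (a, z)).1 - a‖ ≤ 1600 * C / √z.re := by
  have hC0 := hG.nonneg
  have hx : 0 < z.re := by linarith
  set φ : ℝ → E := fun t => (G (a, z + t)).1 - (G (a, z)).1 with hφ
  have hmem : ∀ t : ℝ, 0 ≤ t → (a, z + (t : ℂ)) ∈ horoball E T := fun t ht =>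
    mem_horoball_of_re_ge ha (by simp; linarith) (by simp; linarith)
  have hd : ∀ t : ℝ, 0 ≤ t → HasDerivAt φ (fderiv ℂ G (a, z + t) (0, 1)).1 t := by
    intro t ht
    have h1 : HasDerivAt (fun t : ℂ => (a, z + t)) ((0 : E), (1 : ℂ)) (t : ℂ) := by
      have := (hasDerivAt_id (t : ℂ)).const_add z
      exact (hasDerivAt_const (t : ℂ) a).prodMk this
    have h2 := (hG.differentiableAt (hmem t ht)).hasFDerivAt.comp_hasDerivAt (t : ℂ) h1
    have h3 := (ContinuousLinearMap.fst ℂ E ℂ).hasFDerivAt.comp_hasDerivAt (t : ℂ) h2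
    have h4 := h3.scomp t (Complex.ofRealCLM.hasDerivAt (x := t))
    rw [Complex.ofRealCLM_apply, Complex.ofReal_one, one_smul] at h4
    exact h4.sub_const _
  set B : ℝ → ℝ := fun t => 1600 * C / √z.re - 1600 * C / √(z.re + t) with hB
  have hBd : ∀ t : ℝ, 0 ≤ t → HasDerivAt B (800 * C / ((z.re + t) * √(z.re + t))) t := by
    intro t ht
    have hp : 0 < z.re + t := by linarith
    have hsp : 0 < √(z.re + t) := Real.sqrt_pos.2 hp
    have h1 : HasDerivAt (fun t => √(z.re + t)) (1 / (2 * √(z.re + t))) t :=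
      ((hasDerivAt_id t).const_add z.re).sqrt hp.ne'
    have h2 := ((h1.inv hsp.ne').const_mul (1600 * C)).const_sub (1600 * C / √z.re)
    refine h2.congr_deriv ?_
    have : √(z.re + t) ^ 2 = z.re + t := Real.sq_sqrt hp.le
    rw [this]
    field_simp
    ring
  have hbound : ∀ t : ℝ, 0 ≤ t → ‖φ t‖ ≤ 1600 * C / √z.re := by
    intro τ hτ
    have := image_norm_le_of_norm_deriv_right_le_deriv_boundary' (f := φ)
      (f' := fun t => (fderiv ℂ G (a, z + (t : ℂ)) (0, 1)).1) (a := 0) (b := τ) (B := B)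
      (B' := fun t => 800 * C / ((z.re + t) * √(z.re + t)))
      (fun t ht => (hd t ht.1).continuousAt.continuousWithinAt)
      (fun t ht => (hd t ht.1).hasDerivWithinAt) (by simp [hφ, hB])
      (fun t ht => (hBd t ht.1).continuousAt.continuousWithinAt)
      (fun t ht => (hBd t ht.1).hasDerivWithinAt)
      (fun t ht => by
        have := hG.norm_fst_fderiv_vertical_le (z := z + t) ha (by simp; linarith [ht.1])
          (by simp; linarith [ht.1]) (by simp; linarith [ht.1])
        simpa using this)
      (right_mem_Icc.2 hτ)
    refine this.trans ?_
    simp only [hB, sub_le_self_iff]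
    positivity
  refine le_of_forall_pos_le_add fun ε hε => ?_
  obtain ⟨R, hR⟩ := hA 1 ε hε
  have h1 := hR a (z + (max R 0 : ℝ)) ha (by simp; linarith [le_max_left R 0])
  have h2 := hbound (max R 0) (le_max_right _ _)
  have h3 := (norm_fst_le _).trans h1
  have e : (G (a, z)).1 - a = (G (a, z + (max R 0 : ℝ)) - (a, z + ((max R 0 : ℝ) : ℂ))).1
      - φ (max R 0) := by
    simp [hφ]
  rw [e]
  refine (norm_sub_le _ _).trans ?_
  linarith

end NearlyHeightPreserving

end SiegelModel

section SiegelRigidity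

theorem norm_sub_le_of_re_sub_le {φ : ℂ → ℂ} {R M : ℝ} (hR : 1 < R) (hM : 0 < M)
    (hφ : DifferentiableOn ℂ φ (ball 0 R)) (h : ∀ s ∈ ball (0 : ℂ) R, (φ s).re - (φ 0).re ≤ M) :
    ‖φ 1 - φ 0‖ ≤ 2 * M / (R - 1) := by
  have := Complex.borelCaratheodory_zero (f := fun s => φ s - φ 0) hM (hφ.sub_const _)
    (fun s hs => by simpa using h s hs) (by linarith) (z := 1) (by simpa using hR) (by simp)
  simpa using this

variable {E : Type*} [NormedAddCommGroup E] [InnerProductSpace ℂ E]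

namespace NearlyHeightPreserving

variable {T C : ℝ} {G : E × ℂ → E × ℂ}

theorem abs_re_snd_sub_le (hG : NearlyHeightPreserving T C G) {a : E} {z : ℂ} {η : ℝ}
    (ha : ‖a‖ ≤ 1) (hZ : (a, z) ∈ horoball E T) (hη : ‖(G (a, z)).1 - a‖ ≤ η) :
    |(G (a, z)).2.re - z.re| ≤ C + (2 * η + η ^ 2) := by
  have h1 := hG.height_near _ hZ
  simp only [siegelHeight] at h1
  have hη0 : 0 ≤ η := (norm_nonneg _).trans hη
  have h2 : |‖(G (a, z)).1‖ - ‖a‖| ≤ η := (abs_norm_sub_norm_le _ _).trans hη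
  have h3 : |‖(G (a, z)).1‖ ^ 2 - ‖a‖ ^ 2| ≤ 2 * η + η ^ 2 := by
    have : ‖(G (a, z)).1‖ ^ 2 - ‖a‖ ^ 2
        = (‖(G (a, z)).1‖ - ‖a‖) * (2 * ‖a‖ + (‖(G (a, z)).1‖ - ‖a‖)) := by ring
    rw [this, abs_mul]
    have h4 : |2 * ‖a‖ + (‖(G (a, z)).1‖ - ‖a‖)| ≤ 2 + η := by
      refine (abs_add_le _ _).trans (add_le_add ?_ h2)
      rw [abs_of_nonneg (by positivity)]; linarith
    calc _ ≤ η * (2 + η) := by gcongr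
      _ = _ := by ring
  rw [abs_le] at h1 h3 ⊢
  constructor <;> linarith [h1.1, h1.2, h3.1, h3.2]

end NearlyHeightPreserving

set_option maxHeartbeats 2000000 in
/-- A semigroup of uniformly nearly height preserving maps that are individually asymptotic to the
identity is trivial near infinity. -/
theorem eq_id_of_nearlyHeightPreserving_iterates [FiniteDimensional ℂ E] {T C : ℝ}
    {G : ℕ → E × ℂ → E × ℂ} (hG : ∀ j, NearlyHeightPreserving T C (G j))
    (hA : ∀ j, AsymptoticToId (G j)) (h0 : ∀ Z ∈ horoball E T, G 0 Z = Z)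
    (hl : ∀ j, ∀ Z ∈ horoball E T, G (j + 1) Z = G j (G 1 Z))
    (hr : ∀ j, ∀ Z ∈ horoball E T, G (j + 1) Z = G 1 (G j Z)) :
    ∃ X : ℝ, ∀ (a : E) (z : ℂ), ‖a‖ < 1 / 2 → X < z.re → G 1 (a, z) = (a, z) := by
  have hC0 : 0 ≤ C := (hG 0).nonneg
  set x0 : ℝ := 16 + 2 * |T| + 1600 * C + 1 with hx0
  have hTabs := le_abs_self T
  have hTabs0 := abs_nonneg T
  set K1 : ℝ := 1600 * C + 1 with hK1
  set K2 : ℝ := C + (2 * K1 + K1 ^ 2) with hK2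
  have hK1p : 0 < K1 := by positivity
  have hK2p : 0 < K2 := by positivity
  have hmem : ∀ (a : E) (z : ℂ), ‖a‖ ≤ 1 → x0 ≤ z.re → (a, z) ∈ horoball E T := fun a z ha hz =>
    mem_horoball_of_re_ge ha (by linarith) (by linarith)
  have hg : ∀ j (a : E) (z : ℂ), ‖a‖ ≤ 1 → x0 ≤ z.re → ‖(G j (a, z)).1 - a‖ ≤ K1 / √z.re := by
    intro j a z ha hz
    refine ((hG j).norm_fst_sub_le (hA j) ha (by linarith) (by linarith) (by linarith)).trans ?_
    gcongr
    linarith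
  have hg1 : ∀ j (a : E) (z : ℂ), ‖a‖ ≤ 1 → x0 ≤ z.re → ‖(G j (a, z)).1 - a‖ ≤ K1 := by
    intro j a z ha hz
    refine (hg j a z ha hz).trans (div_le_self hK1p.le ?_)
    rw [Real.one_le_sqrt]; linarith
  have hf : ∀ j (a : E) (z : ℂ), ‖a‖ ≤ 1 → x0 ≤ z.re → |(G j (a, z)).2.re - z.re| ≤ K2 :=
    fun j a z ha hz => (hG j).abs_re_snd_sub_le ha (hmem a z ha hz) (hg1 j a z ha hz)
  -- Lipschitz bound for the first component
  have hLg : ∀ j (a b : E) (z w : ℂ) (η : ℝ), 0 < η → ‖a‖ ≤ 1 / 2 → x0 + 1 ≤ z.re →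
      K1 / √(z.re - 1) ≤ η → ‖(b, w) - (a, z)‖ < 1 / 2 →
      ‖((G j (b, w)).1 - b) - ((G j (a, z)).1 - a)‖ ≤ 6 * η * ‖(b, w) - (a, z)‖ := by
    intro j a b z w η hη ha hz hzη hbw
    have hball : ∀ Y ∈ ball (a, z) (1 / 2), ‖Y.1‖ ≤ 1 ∧ x0 ≤ Y.2.re ∧ z.re - 1 ≤ Y.2.re := by
      intro Y hY
      rw [mem_ball, dist_eq_norm] at hY
      have h1 := (norm_fst_le _).trans hY.le
      have h2 := (norm_snd_le _).trans hY.le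
      have h3 := (abs_le.1 ((Complex.abs_re_le_norm _).trans h2)).1
      simp only [Prod.fst_sub, Prod.snd_sub, sub_re] at h1 h2 h3
      have h4 : ‖Y.1‖ ≤ ‖Y.1 - a‖ + ‖a‖ := by simpa using norm_add_le (Y.1 - a) a
      exact ⟨by linarith, by linarith, by linarith⟩
    have hgη : ∀ Y ∈ ball (a, z) (1 / 2), ‖(G j Y).1 - Y.1‖ ≤ η := by
      intro Y hY
      obtain ⟨h1, h2, h3⟩ := hball Y hY
      refine (hg j Y.1 Y.2 h1 h2).trans (le_trans ?_ hzη)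
      gcongr
      exact Real.sqrt_pos.2 (by linarith)
    have hd : DifferentiableOn ℂ (fun Y => (G j Y).1 - Y.1) (ball (a, z) (1 / 2)) := by
      refine DifferentiableOn.sub ?_ differentiableOn_fst
      refine differentiable_fst.comp_differentiableOn ((hG j).differentiableOn.mono fun Y hY => ?_)
      obtain ⟨h1, h2, h3⟩ := hball Y hY
      exact hmem Y.1 Y.2 h1 h2
    have hmaps : MapsTo (fun Y => (G j Y).1 - Y.1) (ball (a, z) (1 / 2))
        (ball ((G j (a, z)).1 - a) (3 * η)) := by
      intro Y hY
      rw [mem_ball, dist_eq_norm]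
      refine (norm_sub_le _ _).trans_lt ?_
      have h1 := hgη Y hY
      have h2 := hgη (a, z) (by simp)
      simp only at h2
      linarith
    have := Complex.dist_le_div_mul_dist_of_mapsTo_ball hd (c := (a, z))
      (hmaps.mono_right ball_subset_closedBall)
      (z := (b, w)) (by rw [mem_ball, dist_eq_norm]; exact hbw)
    rw [dist_eq_norm, dist_eq_norm] at this
    refine this.trans (le_of_eq ?_)
    ring
  -- Lipschitz bound for the second component
  have hLa : ∀ j (a b : E) (z : ℂ), ‖a‖ ≤ 1 / 2 → x0 ≤ z.re → ‖b - a‖ ≤ 1 / 4 →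
      ‖((G j (b, z)).2 - z) - ((G j (a, z)).2 - z)‖ ≤ 16 * K2 * ‖b - a‖ := by
    intro j a b z ha hz hb
    by_cases hba : b - a = 0
    · simp [sub_eq_zero.1 hba]
    have hbp : 0 < ‖b - a‖ := norm_pos_iff.2 hba
    set R : ℝ := 1 / (2 * ‖b - a‖) with hR
    have hR2 : 2 ≤ R := by rw [hR, le_div_iff₀ (by positivity)]; linarith
    have hball : ∀ s ∈ ball (0 : ℂ) R, ‖a + s • (b - a)‖ ≤ 1 := by
      intro s hs
      have hs' : ‖s‖ < R := by simpa using hs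
      have : ‖s • (b - a)‖ ≤ 1 / 2 := by
        rw [norm_smul]
        calc _ ≤ R * ‖b - a‖ := by gcongr
          _ = 1 / 2 := by rw [hR]; field_simp
      linarith [norm_add_le a (s • (b - a))]
    have := norm_sub_le_of_re_sub_le (φ := fun s => (G j (a + s • (b - a), z)).2 - z) (R := R)
      (M := 2 * K2) (by linarith) (by positivity) ?_ ?_
    · simp only [one_smul, zero_smul, add_zero, add_sub_cancel] at this
      refine this.trans ?_
      rw [div_le_iff₀ (by linarith)]
      have : ‖b - a‖ * R = 1 / 2 := by rw [hR]; field_simp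
      have h3 : 16 * K2 * ‖b - a‖ * (R - 1) = 16 * K2 * (‖b - a‖ * R - ‖b - a‖) := by ring
      rw [h3, this]
      nlinarith
    · refine DifferentiableOn.sub_const (differentiable_snd.comp_differentiableOn
        ((hG j).differentiableOn.comp (by fun_prop) fun s hs => ?_)) _
      exact hmem _ _ (hball s hs) hz
    · intro s hs
      have h1 := hf j _ z (hball s hs) hz
      have h2 := hf j a z (by linarith) hz
      rw [abs_le] at h1 h2
      simp only [sub_re, zero_smul, add_zero]
      linarith [h1.2, h2.1]
  have hLz : ∀ j (a : E) (z w : ℂ), ‖a‖ ≤ 1 → x0 < w.re → ‖z - w‖ < w.re - x0 →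
      ‖((G j (a, z)).2 - z) - ((G j (a, w)).2 - w)‖
        ≤ 4 * K2 * ‖z - w‖ / (w.re - x0 - ‖z - w‖) := by
    intro j a z w ha hw hzw
    by_cases h0 : z - w = 0
    · simp [sub_eq_zero.1 h0]
    have hp : 0 < ‖z - w‖ := norm_pos_iff.2 h0
    set R : ℝ := (w.re - x0) / ‖z - w‖ with hR
    have hR1 : 1 < R := by rw [hR, lt_div_iff₀ hp]; linarith
    have hball : ∀ s ∈ ball (0 : ℂ) R, x0 ≤ (w + s * (z - w)).re := by
      intro s hs
      have hs' : ‖s‖ < R := by simpa using hs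
      have h1 : ‖s * (z - w)‖ ≤ w.re - x0 := by
        rw [norm_mul]
        calc _ ≤ R * ‖z - w‖ := by gcongr
          _ = _ := by rw [hR]; field_simp
      have := (abs_le.1 ((Complex.abs_re_le_norm _).trans h1)).1
      rw [add_re]; linarith
    have := norm_sub_le_of_re_sub_le
      (φ := fun s => (G j (a, w + s * (z - w))).2 - (w + s * (z - w))) (R := R)
      (M := 2 * K2) (by linarith) (by positivity) ?_ ?_
    · simp only [one_mul, zero_mul, add_zero, add_sub_cancel] at this
      refine this.trans (le_of_eq ?_)
      have : R - 1 = (w.re - x0 - ‖z - w‖) / ‖z - w‖ := by rw [hR]; field_simp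
      rw [this]
      have h4 : w.re - x0 - ‖z - w‖ ≠ 0 := by linarith
      field_simp
      ring
    · refine DifferentiableOn.sub (differentiable_snd.comp_differentiableOn
        ((hG j).differentiableOn.comp (by fun_prop) fun s hs => ?_)) (by fun_prop)
      exact hmem _ _ ha (hball s hs)
    · intro s hs
      have h1 := hf j a _ ha (hball s hs)
      have h2 := hf j a w ha hw.le
      rw [abs_le] at h1 h2
      simp only [zero_mul, add_zero, sub_re] at h1 h2 ⊢
      linarith [h1.2, h2.1]
  -- sublinear growth in the number of iterates
  have hgrow : ∀ (a : E) (z : ℂ), ‖a‖ ≤ 1 → x0 < z.re → ∀ η > 0, ∃ c : ℝ, ∀ m : ℕ,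
      ‖(G m (a, z)).2 - z‖ ≤ c + m * η := by
    intro a z ha hz η hη
    obtain ⟨R, hR⟩ := hA 1 (1 + K1) η hη
    set t : ℝ := max R 0 + K2 with ht
    have ht0 : 0 ≤ t := by positivity
    set w : ℂ := z + t with hw
    have hwre : w.re = z.re + t := by simp [hw]
    have hzw : ‖z - w‖ = t := by
      rw [hw, sub_add_cancel_left, norm_neg, Complex.norm_of_nonneg ht0]
    refine ⟨4 * K2 * ‖z - w‖ / (w.re - x0 - ‖z - w‖), fun m => ?_⟩
    have h1 := hLz m a z w ha (by linarith) (by rw [hzw]; linarith)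
    have h2 : ∀ m : ℕ, ‖(G m (a, w)).2 - w‖ ≤ m * η := by
      intro m
      induction m with
      | zero => rw [h0 _ (hmem a w ha (by linarith))]; simp
      | succ m ih =>
        rw [hr m _ (hmem a w ha (by linarith))]
        have h3 := hg1 m a w ha (by linarith)
        have h4 := (abs_le.1 (hf m a w ha (by linarith))).1
        have h5 : ‖(G m (a, w)).1‖ ≤ 1 + K1 := by
          have : ‖(G m (a, w)).1‖ ≤ ‖(G m (a, w)).1 - a‖ + ‖a‖ := by
            simpa using norm_add_le ((G m (a, w)).1 - a) a
          linarith
        have h6 := hR (G m (a, w)).1 (G m (a, w)).2 h5 (by linarith [le_max_left R 0])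
        have h7 := (norm_snd_le _).trans h6
        simp only [Prod.snd_sub, Prod.mk.eta] at h7
        have h8 : (G 1 (G m (a, w))).2 - w
            = ((G 1 (G m (a, w))).2 - (G m (a, w)).2) + ((G m (a, w)).2 - w) := by ring
        rw [h8]
        refine (norm_add_le _ _).trans ?_
        push_cast
        linarith
    have h9 : (G m (a, z)).2 - z
        = (((G m (a, z)).2 - z) - ((G m (a, w)).2 - w)) + ((G m (a, w)).2 - w) := by ring
    rw [h9]
    exact (norm_add_le _ _).trans (add_le_add h1 (h2 m))
  -- choice of the region
  obtain ⟨R, hR⟩ := hA 1 (1 / 2) (1 / 8) (by norm_num)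
  set η : ℝ := 1 / (6 * (4 + 64 * K2)) with hη
  have hηp : 0 < η := by positivity
  refine ⟨max R (x0 + 1 + 16 * K2 + (K1 / η) ^ 2), fun a z ha hz => ?_⟩
  have hzR : R ≤ z.re := (le_max_left _ _).trans hz.le
  have hzX : x0 + 1 + 16 * K2 + (K1 / η) ^ 2 < z.re := (le_max_right _ _).trans_lt hz
  have hsq : 0 ≤ (K1 / η) ^ 2 := sq_nonneg _
  have hδ := hR a z ha.le hzR
  have hZm := hmem a z (by linarith) (by linarith)
  set b := (G 1 (a, z)).1 with hb
  set w := (G 1 (a, z)).2 with hw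
  have hbw : G 1 (a, z) = (b, w) := rfl
  have hδ1 : ‖b - a‖ ≤ 1 / 8 := (norm_fst_le _).trans hδ
  have hδ2 : ‖w - z‖ ≤ 1 / 8 := (norm_snd_le _).trans hδ
  have hzη : K1 / √(z.re - 1) ≤ η := by
    rw [div_le_iff₀ (Real.sqrt_pos.2 (by linarith)), mul_comm, ← div_le_iff₀ hηp]
    exact Real.le_sqrt_of_sq_le (by linarith)
  have hb34 : ‖b‖ ≤ 1 := by
    have : ‖b‖ ≤ ‖b - a‖ + ‖a‖ := by simpa using norm_add_le (b - a) a
    linarith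
  have hnorm : ‖(b, w) - (a, z)‖ ≤ ‖b - a‖ + ‖w - z‖ := by
    simp only [Prod.mk_sub_mk, Prod.norm_mk]
    exact max_le (by linarith [norm_nonneg (w - z)]) (by linarith [norm_nonneg (b - a)])
  have hD1 : ∀ j, ‖((G (j + 1) (a, z)).1 - (G j (a, z)).1) - (b - a)‖
      ≤ 6 * η * (‖b - a‖ + ‖w - z‖) := by
    intro j
    have h1 := hLg j a b z w η hηp ha.le (by linarith) hzη (by linarith)
    rw [hl j _ hZm, hbw]
    have e : ((G j (b, w)).1 - (G j (a, z)).1) - (b - a)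
      = ((G j (b, w)).1 - b) - ((G j (a, z)).1 - a) := by abel
    rw [e]
    exact h1.trans (by gcongr)
  have hD2 : ∀ j, ‖((G (j + 1) (a, z)).2 - (G j (a, z)).2) - (w - z)‖
      ≤ 16 * K2 * ‖b - a‖ + 1 / 2 * ‖w - z‖ := by
    intro j
    rw [hl j _ hZm, hbw]
    have h1 := hLa j a b z ha.le (by linarith) (by linarith)
    have h2 := hLz j b w z hb34 (by linarith) (by linarith)
    have h3 : 4 * K2 * ‖w - z‖ / (z.re - x0 - ‖w - z‖) ≤ 1 / 2 * ‖w - z‖ := by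
      rw [div_le_iff₀ (by linarith)]
      have : 8 * K2 ≤ z.re - x0 - ‖w - z‖ := by linarith
      nlinarith [norm_nonneg (w - z)]
    have e : ((G j (b, w)).2 - (G j (a, z)).2) - (w - z)
      = (((G j (b, w)).2 - w) - ((G j (b, z)).2 - z))
        + (((G j (b, z)).2 - z) - ((G j (a, z)).2 - z)) := by ring
    rw [e]
    refine (norm_add_le _ _).trans ?_
    linarith
  have hS1 : ∀ m : ℕ, m * ‖b - a‖ ≤ K1 + m * (6 * η * (‖b - a‖ + ‖w - z‖)) := by
    intro m
    have h1 : ‖((G m (a, z)).1 - a) - (m : ℂ) • (b - a)‖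
        ≤ m * (6 * η * (‖b - a‖ + ‖w - z‖)) := by
      induction m with
      | zero => rw [h0 _ hZm]; simp
      | succ m ih =>
        have e : ((G (m + 1) (a, z)).1 - a) - ((m + 1 : ℕ) : ℂ) • (b - a)
          = (((G (m + 1) (a, z)).1 - (G m (a, z)).1) - (b - a))
            + (((G m (a, z)).1 - a) - (m : ℂ) • (b - a)) := by
          push_cast; rw [add_smul, one_smul]; abel
        rw [e]
        refine (norm_add_le _ _).trans ?_
        have := hD1 m
        push_cast; linarith
    have h2 := hg1 m a z (by linarith) (by linarith)
    have h3 : ‖(m : ℂ) • (b - a)‖ = m * ‖b - a‖ := by rw [norm_smul, Complex.norm_natCast]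
    have h4 := norm_sub_norm_le ((m : ℂ) • (b - a)) ((G m (a, z)).1 - a)
    rw [norm_sub_rev ((m : ℂ) • (b - a))] at h4
    linarith
  have hS2 : ∀ m : ℕ, m * ‖w - z‖ ≤ ‖(G m (a, z)).2 - z‖
      + m * (16 * K2 * ‖b - a‖ + 1 / 2 * ‖w - z‖) := by
    intro m
    have h1 : ‖((G m (a, z)).2 - z) - (m : ℂ) * (w - z)‖
        ≤ m * (16 * K2 * ‖b - a‖ + 1 / 2 * ‖w - z‖) := by
      induction m with
      | zero => rw [h0 _ hZm]; simp
      | succ m ih =>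
        have e : ((G (m + 1) (a, z)).2 - z) - ((m + 1 : ℕ) : ℂ) * (w - z)
          = (((G (m + 1) (a, z)).2 - (G m (a, z)).2) - (w - z))
            + (((G m (a, z)).2 - z) - (m : ℂ) * (w - z)) := by
          push_cast; ring
        rw [e]
        refine (norm_add_le _ _).trans ?_
        have := hD2 m
        push_cast; linarith
    have h3 : ‖(m : ℂ) * (w - z)‖ = m * ‖w - z‖ := by rw [norm_mul, Complex.norm_natCast]
    have h4 := norm_sub_norm_le ((m : ℂ) * (w - z)) ((G m (a, z)).2 - z)
    rw [norm_sub_rev ((m : ℂ) * (w - z))] at h4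
    linarith
  have harch : ∀ p q c : ℝ, (∀ m : ℕ, m * p ≤ c + m * q) → p ≤ q := by
    intro p q c h
    by_contra! hlt
    obtain ⟨m, hm⟩ := exists_nat_gt (c / (p - q))
    rw [div_lt_iff₀ (by linarith)] at hm
    have := h m
    nlinarith
  have hF1 := harch _ _ _ hS1
  have hF2 : ‖w - z‖ ≤ 16 * K2 * ‖b - a‖ + 1 / 2 * ‖w - z‖ := by
    refine le_of_forall_pos_le_add fun ε hε => ?_
    obtain ⟨c, hc⟩ := hgrow a z (by linarith) (by linarith) ε hε
    refine harch _ _ c fun m => ?_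
    have := hS2 m
    have := hc m
    linarith
  have h6 : 6 * η * (4 + 64 * K2) = 1 := by rw [hη]; field_simp
  have hba : ‖b - a‖ = 0 := by
    have h1 : ‖w - z‖ ≤ 32 * K2 * ‖b - a‖ := by linarith
    have h2 : ‖b - a‖ ≤ 6 * η * ((1 + 32 * K2) * ‖b - a‖) := by
      refine hF1.trans ?_
      gcongr
      linarith
    have h3 : 6 * η * (1 + 32 * K2) ≤ 1 / 2 := by linarith
    have h4 := mul_le_mul_of_nonneg_right h3 (norm_nonneg (b - a))
    exact le_antisymm (by linarith) (norm_nonneg _)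
  have hwz : ‖w - z‖ = 0 := by
    rw [hba] at hF2
    linarith [norm_nonneg (w - z)]
  rw [hbw, sub_eq_zero.1 (norm_eq_zero.1 hba), sub_eq_zero.1 (norm_eq_zero.1 hwz)]

end SiegelRigidity

section PhragmenLindelof

/-- Local sub-mean value property of `w` at `z₀` for all small circles. -/
def HasSubMeanAt (w : ℂ → ℝ) (z₀ : ℂ) : Prop :=
  ∀ᶠ R in 𝓝[>] (0 : ℝ), w z₀ ≤ Real.circleAverage w z₀ R

theorem eventually_pos_and_closedBall_subset {X : Type*} [PseudoMetricSpace X] {U : Set X} {z₀ : X}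
    (hU : U ∈ 𝓝 z₀) :
    ∀ᶠ R in 𝓝[>] (0 : ℝ), 0 < R ∧ closedBall z₀ R ⊆ U := by
  obtain ⟨ε, hε, h⟩ := Metric.nhds_basis_closedBall.mem_iff.1 hU
  filter_upwards [Ioc_mem_nhdsGT hε] with R hR
  exact ⟨hR.1, (closedBall_subset_closedBall hR.2).trans h⟩

theorem hasSubMeanAt_of_support {F : Type*} [NormedAddCommGroup F] [InnerProductSpace ℂ F]
    [CompleteSpace F] {w : ℂ → ℝ} {z₀ : ℂ} {h : ℂ → F} {k : ℂ → ℂ}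
    (hh : ∀ᶠ z in 𝓝 z₀, DifferentiableAt ℂ h z) (hk : ∀ᶠ z in 𝓝 z₀, DifferentiableAt ℂ k z)
    (hw : ∀ᶠ z in 𝓝 z₀, ContinuousAt w z) (h0 : w z₀ = ‖h z₀‖ ^ 2 + (k z₀).re)
    (hle : ∀ᶠ z in 𝓝 z₀, ‖h z‖ ^ 2 + (k z).re ≤ w z) : HasSubMeanAt w z₀ := by
  filter_upwards [eventually_pos_and_closedBall_subset (hh.and (hk.and (hw.and hle)))] with R hR
  obtain ⟨hR0, hR⟩ := hR
  have hR' : closedBall z₀ |R| ⊆ closedBall z₀ R := by rw [abs_of_pos hR0]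
  have hd : DifferentiableOn ℂ h (closedBall z₀ R) :=
    fun z hz => (hR hz).1.differentiableWithinAt
  have kd : DifferentiableOn ℂ k (closedBall z₀ R) :=
    fun z hz => (hR hz).2.1.differentiableWithinAt
  have hs : sphere z₀ |R| ⊆ closedBall z₀ R := sphere_subset_closedBall.trans hR'
  have i1 : CircleIntegrable (fun z => ‖h z‖ ^ 2) z₀ R :=
    ((hd.continuousOn.mono hs).norm.pow 2).circleIntegrable'
  have i2 : CircleIntegrable (fun z => (k z).re) z₀ R :=
    (Complex.continuous_re.comp_continuousOn (kd.continuousOn.mono hs)).circleIntegrable'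
  have i3 : CircleIntegrable w z₀ R := ContinuousOn.circleIntegrable'
    fun z hz => (hR (hs hz)).2.2.1.continuousWithinAt
  have e := Real.circleAverage_fun_add i1 i2
  rw [circleAverage_re_eq kd hR'] at e
  have h1 := norm_sq_le_circleAverage hd hR'
  have h2 : Real.circleAverage (fun z => ‖h z‖ ^ 2 + (k z).re) z₀ R ≤ Real.circleAverage w z₀ R :=
    Real.circleAverage_mono (i1.add i2) i3 fun z hz => (hR (hs hz)).2.2.2
  rw [h0]
  linarith

theorem HasSubMeanAt.add_re {w : ℂ → ℝ} {z₀ : ℂ} (h : HasSubMeanAt w z₀) {k : ℂ → ℂ}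
    (hk : ∀ᶠ z in 𝓝 z₀, DifferentiableAt ℂ k z) (hw : ∀ᶠ z in 𝓝 z₀, ContinuousAt w z) :
    HasSubMeanAt (fun z => w z + (k z).re) z₀ := by
  filter_upwards [eventually_pos_and_closedBall_subset (hk.and hw), h] with R hR hav
  obtain ⟨hR0, hR⟩ := hR
  have hR' : closedBall z₀ |R| ⊆ closedBall z₀ R := by rw [abs_of_pos hR0]
  have hs : sphere z₀ |R| ⊆ closedBall z₀ R := sphere_subset_closedBall.trans hR'
  have kd : DifferentiableOn ℂ k (closedBall z₀ R) :=
    fun z hz => (hR hz).1.differentiableWithinAt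
  have i2 : CircleIntegrable (fun z => (k z).re) z₀ R :=
    (Complex.continuous_re.comp_continuousOn (kd.continuousOn.mono hs)).circleIntegrable'
  have i3 : CircleIntegrable w z₀ R := ContinuousOn.circleIntegrable'
    fun z hz => (hR (hs hz)).2.continuousWithinAt
  rw [Real.circleAverage_fun_add i3 i2, circleAverage_re_eq kd hR']
  linarith

/-- Maximum principle for functions with the local sub-mean value property. -/
theorem le_zero_of_hasSubMeanAt {K U : Set ℂ} (hK : IsCompact K) (hU : IsOpen U) (hUK : U ⊆ K)
    {w : ℂ → ℝ} (hw : ContinuousOn w K) (hbd : ∀ z ∈ K \ U, w z ≤ 0)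
    (hsub : ∀ z ∈ U, HasSubMeanAt w z) : ∀ z ∈ K, w z ≤ 0 := by
  intro z₁ hz₁
  by_contra! hpos
  obtain ⟨B, hB⟩ := hK.isBounded.exists_norm_le
  set δ : ℝ := w z₁ / (2 * (B ^ 2 + 1)) with hδ
  have hδp : 0 < δ := by positivity
  set W : ℂ → ℝ := fun z => w z + δ * ‖z‖ ^ 2 with hW
  have hWc : ContinuousOn W K := hw.add (by fun_prop)
  obtain ⟨z₀, hz₀, hmax⟩ := hK.exists_isMaxOn ⟨z₁, hz₁⟩ hWc
  have hz₀pos : 0 < w z₀ := by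
    have h1 : W z₁ ≤ W z₀ := hmax hz₁
    have h2 : ‖z₀‖ ^ 2 ≤ B ^ 2 := by gcongr; exact hB _ hz₀
    have h3 : δ * (2 * (B ^ 2 + 1)) = w z₁ := by rw [hδ]; field_simp
    have h4 : δ * ‖z₀‖ ^ 2 ≤ δ * B ^ 2 := by gcongr
    simp only [hW] at h1
    have h5 : 0 ≤ δ * ‖z₁‖ ^ 2 := by positivity
    nlinarith
  have hz₀U : z₀ ∈ U := by
    by_contra hn
    exact absurd (hbd z₀ ⟨hz₀, hn⟩) (not_le.2 hz₀pos)
  obtain ⟨R, ⟨hR0, hR⟩, hav⟩ :=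
    ((eventually_pos_and_closedBall_subset (hU.mem_nhds hz₀U)).and (hsub z₀ hz₀U)).exists
  have hR' : closedBall z₀ |R| ⊆ closedBall z₀ R := by rw [abs_of_pos hR0]
  have hs : sphere z₀ |R| ⊆ K := sphere_subset_closedBall.trans (hR'.trans (hR.trans hUK))
  have i1 : CircleIntegrable w z₀ R := (hw.mono hs).circleIntegrable'
  have i2 : CircleIntegrable (fun z : ℂ => δ • ‖z‖ ^ 2) z₀ R :=
    ContinuousOn.circleIntegrable' (by fun_prop)
  have h1 : Real.circleAverage W z₀ R ≤ W z₀ := by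
    apply Real.circleAverage_mono_on_of_le_circle (hWc.mono hs).circleIntegrable'
    exact fun z hz => hmax (hs hz)
  have h2 : Real.circleAverage W z₀ R
      = Real.circleAverage w z₀ R + δ * Real.circleAverage (fun z : ℂ => ‖z‖ ^ 2) z₀ R := by
    have := Real.circleAverage_fun_add i1 i2
    rw [Real.circleAverage_fun_smul] at this
    exact this
  have h3 := circleAverage_norm_sq_sub_center (f := fun z : ℂ => z) (U := univ) (c := z₀) (R := R)
    (by fun_prop) (subset_univ _)
  have h4 : Real.circleAverage (fun z : ℂ => ‖z - z₀‖ ^ 2) z₀ R = R ^ 2 := by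
    rw [Real.circleAverage_congr_sphere (f₂ := fun _ => R ^ 2), Real.circleAverage_const]
    intro z hz
    have : ‖z - z₀‖ = |R| := by simpa [dist_eq_norm] using hz
    simp [this]
  rw [h4] at h3
  have h5 : Real.circleAverage (fun z : ℂ => ‖z‖ ^ 2) z₀ R = R ^ 2 + ‖z₀‖ ^ 2 := by linarith
  rw [h2, h5] at h1
  simp only [hW] at h1
  have : 0 < δ * R ^ 2 := by positivity
  nlinarith

/-- Phragmén–Lindelöf in a half-plane for bounded above functions. -/
theorem le_zero_of_hasSubMeanAt_halfPlane {c B R : ℝ} {w : ℂ → ℝ}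
    (hw : ∀ z : ℂ, c ≤ z.re → ContinuousAt w z) (hbd : ∀ z : ℂ, z.re = c → w z ≤ 0)
    (hB : ∀ z : ℂ, c ≤ z.re → R ≤ ‖z‖ → w z ≤ B)
    (hsub : ∀ z : ℂ, c < z.re → HasSubMeanAt w z) :
    ∀ z : ℂ, c ≤ z.re → w z ≤ 0 := by
  intro z₁ hz₁
  have hlogpos : ∀ z : ℂ, c ≤ z.re → 1 ≤ ‖1 + (z - c)‖ := by
    intro z hz
    refine le_trans ?_ (Complex.re_le_norm _)
    simp; linarith
  have hslit : ∀ z : ℂ, c ≤ z.re → 1 + (z - c) ∈ slitPlane := by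
    intro z hz
    refine Complex.mem_slitPlane_iff.2 (Or.inl ?_)
    simp; linarith
  have key : ∀ ε > 0, w z₁ ≤ ε * Real.log ‖1 + (z₁ - c)‖ := by
    intro ε hε
    set L : ℂ → ℂ := fun z => -(ε : ℂ) * Complex.log (1 + (z - c)) with hL
    have hLre : ∀ z, (L z).re = -(ε * Real.log ‖1 + (z - c)‖) := by
      intro z
      simp only [hL, neg_mul, neg_re, re_ofReal_mul, Complex.log_re]
    set W : ℂ → ℝ := fun z => w z + (L z).re with hW
    have hLd : ∀ z : ℂ, c ≤ z.re → DifferentiableAt ℂ L z := by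
      intro z hz
      have : DifferentiableAt ℂ (fun z : ℂ => 1 + (z - c)) z := by fun_prop
      exact (this.clog (hslit z hz)).const_mul _
    set R' : ℝ := max (max R ‖z₁‖) (1 + |c| + Real.exp (max B 0 / ε)) + 1 with hR'
    have hR1 : R ≤ R' := by
      linarith [le_max_left R ‖z₁‖, le_max_left (max R ‖z₁‖) (1 + |c| + Real.exp (max B 0 / ε))]
    have hR2 : ‖z₁‖ ≤ R' := by
      linarith [le_max_right R ‖z₁‖, le_max_left (max R ‖z₁‖) (1 + |c| + Real.exp (max B 0 / ε))]
    have hR3 : 1 + |c| + Real.exp (max B 0 / ε) ≤ R' := by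
      linarith [le_max_right (max R ‖z₁‖) (1 + |c| + Real.exp (max B 0 / ε))]
    set K : Set ℂ := {z | c ≤ z.re} ∩ closedBall 0 R' with hK
    set U : Set ℂ := {z | c < z.re} ∩ ball 0 R' with hU
    have hUK : U ⊆ K := inter_subset_inter (fun z (hz : c < z.re) => hz.le) ball_subset_closedBall
    have := le_zero_of_hasSubMeanAt (K := K) (U := U) (w := W)
      ((isCompact_closedBall 0 R').inter_left (isClosed_le continuous_const continuous_re))
      ((isOpen_lt continuous_const continuous_re).inter isOpen_ball) hUK ?_ ?_ ?_ z₁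
      ⟨hz₁, by simpa using hR2⟩
    · simp only [hW, hLre] at this
      linarith
    · intro z hz
      exact ((hw z hz.1).add
        (Complex.continuous_re.continuousAt.comp (hLd z hz.1).continuousAt)).continuousWithinAt
    · rintro z ⟨⟨hz1, hz2⟩, hz3⟩
      have hz1 : c ≤ z.re := hz1
      have hz2 : ‖z‖ ≤ R' := by simpa using hz2
      have hlog0 : 0 ≤ Real.log ‖1 + (z - c)‖ := Real.log_nonneg (hlogpos z hz1)
      simp only [hW, hLre]
      rcases hz1.eq_or_lt with h | h
      · have := hbd z h.symm
        have : 0 ≤ ε * Real.log ‖1 + (z - c)‖ := by positivity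
        linarith
      · have hzR : R' ≤ ‖z‖ := by
          by_contra! hlt
          exact hz3 ⟨h, by simpa using hlt⟩
        have h1 := hB z hz1 (hR1.trans hzR)
        have h2 : max B 0 / ε ≤ Real.log ‖1 + (z - c)‖ := by
          rw [Real.le_log_iff_exp_le (by linarith [hlogpos z hz1])]
          have h3 : ‖z‖ ≤ ‖1 + (z - c)‖ + ‖(1 : ℂ)‖ + ‖(c : ℂ)‖ := by
            have : z = (1 + (z - c)) - 1 + c := by ring
            calc ‖z‖ = ‖(1 + (z - c)) - 1 + c‖ := by rw [← this]
              _ ≤ ‖(1 + (z - c)) - 1‖ + ‖(c : ℂ)‖ := norm_add_le _ _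
              _ ≤ _ := by gcongr; exact norm_sub_le _ _
          rw [norm_one, Complex.norm_real, Real.norm_eq_abs] at h3
          linarith
        rw [div_le_iff₀ hε] at h2
        linarith [le_max_left B 0]
    · rintro z ⟨hz1, hz2⟩
      have hev : ∀ᶠ y in 𝓝 z, c < y.re :=
        (isOpen_lt continuous_const continuous_re).mem_nhds hz1
      exact (hsub z hz1).add_re (hev.mono fun y hy => hLd y hy.le) (hev.mono fun y hy => hw y hy.le)
  refine le_of_forall_pos_le_add fun η hη => ?_
  have hlog0 : 0 ≤ Real.log ‖1 + (z₁ - c)‖ := Real.log_nonneg (hlogpos z₁ hz₁)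
  refine (key (η / (Real.log ‖1 + (z₁ - c)‖ + 1)) (by positivity)).trans ?_
  rw [div_mul_eq_mul_div, div_le_iff₀ (by positivity)]
  nlinarith

end PhragmenLindelof

section Julia

variable {V E : Type*} [NormedAddCommGroup V] [InnerProductSpace ℂ V]
  [NormedAddCommGroup E] [InnerProductSpace ℂ E]

/-- Mutually inverse holomorphic coordinates near a boundary point `p` of `Ω`, sending `p` to
infinity and osculating the Siegel model there. -/
structure SiegelChart (Ω : Set V) (p : V) (E : Type*) [NormedAddCommGroup E]
    [InnerProductSpace ℂ E] where
  /-- the coordinates -/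
  toFun : V → E × ℂ
  /-- the inverse map -/
  inv : E × ℂ → V
  /-- the radius of definition -/
  r : ℝ
  /-- the level above which the inverse is defined -/
  level : ℝ
  r_pos : 0 < r
  differentiableOn_inv : DifferentiableOn ℂ inv (horoball E level)
  inv_mem : ∀ Y ∈ horoball E level, inv Y ∈ Ω ∩ ball p r
  right_inv : ∀ Y ∈ horoball E level, toFun (inv Y) = Y
  differentiableOn : DifferentiableOn ℂ toFun (Ω ∩ ball p r)
  left_inv : ∀ x ∈ Ω ∩ ball p r, toFun x ∈ horoball E level → inv (toFun x) = x
  height_bddBelow : ∃ C : ℝ, ∀ x ∈ Ω ∩ ball p r, -C ≤ siegelHeight (toFun x)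
  height_bddAbove : ∃ M : ℝ, ∀ x ∈ Ω ∩ ball p r, r / 4 ≤ ‖x - p‖ → siegelHeight (toFun x) ≤ M

namespace SiegelChart

variable {Ω : Set V} {p : V}

/-- In the chart `χ`, the map `G` is close to the identity near infinity above level `T`. -/
def TangentToId (χ : SiegelChart Ω p E) (T : ℝ) (G : V → V) : Prop :=
  ∀ A : ℝ, ∀ ε > 0, ∃ R : ℝ, ∀ (a : E) (z : ℂ), ‖a‖ ≤ A → (a, z) ∈ horoball E T → R ≤ ‖z‖ →
    G (χ.inv (a, z)) ∈ ball p (χ.r / 4) ∧ ‖χ.toFun (G (χ.inv (a, z))) - (a, z)‖ ≤ ε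

variable (χ : SiegelChart Ω p E)

/-- Gluing of minus the height near `p` with a strictly plurisubharmonic quadratic away from `p`. -/
def barrier (N M : ℝ) (x : V) : ℝ :=
  if ‖x - p‖ ≤ χ.r / 4 then -siegelHeight (χ.toFun x)
  else if ‖x - p‖ < 7 * χ.r / 8 then
    max (-siegelHeight (χ.toFun x)) (N * (‖x - p‖ ^ 2 - χ.r ^ 2 / 4) - M - 1)
  else N * (‖x - p‖ ^ 2 - χ.r ^ 2 / 4) - M - 1

variable {χ} {N M C : ℝ}

theorem le_barrier_left {x : V} (hx : ‖x - p‖ < 7 * χ.r / 8) :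
    -siegelHeight (χ.toFun x) ≤ χ.barrier N M x := by
  unfold barrier
  split_ifs with h
  · exact le_rfl
  · exact le_max_left _ _

theorem le_barrier_right {x : V} (hx : χ.r / 4 < ‖x - p‖) :
    N * (‖x - p‖ ^ 2 - χ.r ^ 2 / 4) - M - 1 ≤ χ.barrier N M x := by
  unfold barrier
  rw [if_neg (not_le.2 hx)]
  split_ifs with h
  · exact le_max_right _ _
  · exact le_rfl

theorem barrier_cases (x : V) :
    (‖x - p‖ < 7 * χ.r / 8 ∧ χ.barrier N M x = -siegelHeight (χ.toFun x)) ∨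
    (χ.r / 4 < ‖x - p‖ ∧ χ.barrier N M x = N * (‖x - p‖ ^ 2 - χ.r ^ 2 / 4) - M - 1) := by
  have hr := χ.r_pos
  unfold barrier
  split_ifs with h1 h2
  · exact Or.inl ⟨by linarith, rfl⟩
  · rcases max_choice (-siegelHeight (χ.toFun x))
      (N * (‖x - p‖ ^ 2 - χ.r ^ 2 / 4) - M - 1) with h | h
    · exact Or.inl ⟨h2, h⟩
    · exact Or.inr ⟨not_le.1 h1, h⟩
  · exact Or.inr ⟨not_le.1 h1, rfl⟩

theorem continuousAt_barrier (hΩ : IsOpen Ω) (hN : 0 ≤ N)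
    (hM : ∀ x ∈ Ω ∩ ball p χ.r, χ.r / 4 ≤ ‖x - p‖ → siegelHeight (χ.toFun x) ≤ M)
    (hC : ∀ x ∈ Ω ∩ ball p χ.r, -C ≤ siegelHeight (χ.toFun x))
    (hNC : C ≤ N * (5 * χ.r ^ 2 / 16) - M - 1) {x : V} (hx : x ∈ Ω) :
    ContinuousAt (χ.barrier N M) x := by
  have hr := χ.r_pos
  have cn : Continuous fun y : V => ‖y - p‖ := by fun_prop
  have c2 : ContinuousAt (fun y : V => N * (‖y - p‖ ^ 2 - χ.r ^ 2 / 4) - M - 1) x := by fun_prop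
  have c1 : ‖x - p‖ < χ.r → ContinuousAt (fun y : V => -siegelHeight (χ.toFun y)) x := by
    intro h
    have hxm : x ∈ Ω ∩ ball p χ.r := ⟨hx, by simpa [dist_eq_norm] using h⟩
    have := (χ.differentiableOn.continuousOn).continuousAt ((hΩ.inter isOpen_ball).mem_nhds hxm)
    exact (continuous_siegelHeight.continuousAt.comp this).neg
  by_cases h1 : ‖x - p‖ < χ.r / 2
  · refine (c1 (by linarith)).congr ?_
    filter_upwards [hΩ.mem_nhds hx, cn.continuousAt.eventually_lt_const h1] with y hy hy2
    unfold barrier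
    split_ifs with h3 h4
    · rfl
    · rw [max_eq_left]
      have h5 := hM y ⟨hy, by simp [dist_eq_norm]; linarith⟩ (not_le.1 h3).le
      have h6 : ‖y - p‖ ^ 2 ≤ χ.r ^ 2 / 4 := by nlinarith [norm_nonneg (y - p)]
      nlinarith
    · linarith
  by_cases h2 : 3 * χ.r / 4 < ‖x - p‖
  · refine c2.congr ?_
    filter_upwards [hΩ.mem_nhds hx, cn.continuousAt.eventually_const_lt h2] with y hy hy2
    unfold barrier
    split_ifs with h3 h4
    · linarith
    · rw [max_eq_right]
      have h5 := hC y ⟨hy, by simp [dist_eq_norm]; linarith⟩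
      have h6 : 5 * χ.r ^ 2 / 16 ≤ ‖y - p‖ ^ 2 - χ.r ^ 2 / 4 := by nlinarith [norm_nonneg (y - p)]
      nlinarith
    · rfl
  push Not at h1 h2
  have c3 : ContinuousAt (fun y : V => max (-siegelHeight (χ.toFun y))
      (N * (‖y - p‖ ^ 2 - χ.r ^ 2 / 4) - M - 1)) x := (c1 (by linarith)).max c2
  refine c3.congr ?_
  filter_upwards [cn.continuousAt.eventually_const_lt (show χ.r / 4 < ‖x - p‖ by linarith),
    cn.continuousAt.eventually_lt_const (show ‖x - p‖ < 7 * χ.r / 8 by linarith)] with y hy hy2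
  unfold barrier
  rw [if_neg (not_le.2 hy), if_pos hy2]

/-- Along holomorphic curves in `Ω` the barrier has the sub-mean value property. -/
theorem hasSubMeanAt_barrier [CompleteSpace V] [CompleteSpace E] (hΩ : IsOpen Ω) (hN : 0 ≤ N)
    (hv : ∀ x ∈ Ω, ContinuousAt (χ.barrier N M) x)
    {γ : ℂ → V} {z₀ : ℂ} (hγ : ∀ᶠ z in 𝓝 z₀, DifferentiableAt ℂ γ z) (hγΩ : ∀ᶠ z in 𝓝 z₀, γ z ∈ Ω) :
    HasSubMeanAt (fun z => χ.barrier N M (γ z)) z₀ := by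
  have hr := χ.r_pos
  have hcont : ∀ᶠ z in 𝓝 z₀, ContinuousAt (fun z => χ.barrier N M (γ z)) z := by
    filter_upwards [hγ, hγΩ] with z hz hzΩ
    exact ContinuousAt.comp (hv _ hzΩ) hz.continuousAt
  have hγc : ContinuousAt (fun z => ‖γ z - p‖) z₀ :=
    (hγ.self_of_nhds.continuousAt.sub continuousAt_const).norm
  rcases χ.barrier_cases (N := N) (M := M) (γ z₀) with ⟨h1, h2⟩ | ⟨h1, h2⟩
  · have hlt := hγc.eventually_lt_const h1
    have hd : ∀ᶠ z in 𝓝 z₀, DifferentiableAt ℂ (fun z => χ.toFun (γ z)) z := by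
      filter_upwards [hγ, hγΩ, hlt] with z hz hzΩ hzl
      have hm : γ z ∈ Ω ∩ ball p χ.r := ⟨hzΩ, by simp [dist_eq_norm]; linarith⟩
      exact ((χ.differentiableOn _ hm).differentiableAt
        ((hΩ.inter isOpen_ball).mem_nhds hm)).comp z hz
    refine hasSubMeanAt_of_support (h := fun z => (χ.toFun (γ z)).1)
      (k := fun z => -(χ.toFun (γ z)).2) (hd.mono fun z hz => hz.fst)
      (hd.mono fun z hz => hz.snd.neg) hcont ?_ ?_
    · rw [h2, siegelHeight, neg_re]; ring
    · filter_upwards [hlt] with z hz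
      refine le_trans (le_of_eq ?_) (χ.le_barrier_left hz)
      rw [siegelHeight, neg_re]; ring
  · have hlt := hγc.eventually_const_lt h1
    have e : ∀ x : V, N * (‖x - p‖ ^ 2 - χ.r ^ 2 / 4) - M - 1
        = ‖((√N : ℝ) : ℂ) • (x - p)‖ ^ 2 + ((-(N * χ.r ^ 2 / 4) - M - 1 : ℝ) : ℂ).re := by
      intro x
      rw [norm_smul, mul_pow, Complex.norm_real, Real.norm_eq_abs, sq_abs, Real.sq_sqrt hN,
        ofReal_re]
      ring
    refine hasSubMeanAt_of_support (h := fun z => ((√N : ℝ) : ℂ) • (γ z - p))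
      (k := fun _ => ((-(N * χ.r ^ 2 / 4) - M - 1 : ℝ) : ℂ))
      (hγ.mono fun z hz => (hz.sub_const p).const_smul _)
      (Eventually.of_forall fun z => differentiableAt_const _) hcont ?_ ?_
    · rw [h2, e]
    · filter_upwards [hlt] with z hz
      rw [← e]
      exact χ.le_barrier_right hz

theorem exists_barrier (χ : SiegelChart Ω p E) (hΩ : IsOpen Ω) (hb : Bornology.IsBounded Ω) :
    ∃ N M D : ℝ, 0 ≤ N ∧ (∀ x ∈ Ω, ContinuousAt (χ.barrier N M) x) ∧
      ∀ x ∈ Ω, χ.barrier N M x ≤ D := by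
  obtain ⟨C₀, hC₀⟩ := χ.height_bddBelow
  obtain ⟨M₀, hM₀⟩ := χ.height_bddAbove
  obtain ⟨B, hB⟩ := (hb.subset_ball p)
  have hr := χ.r_pos
  set C := max C₀ 0
  set M := max M₀ 0
  have hC : ∀ x ∈ Ω ∩ ball p χ.r, -C ≤ siegelHeight (χ.toFun x) := fun x hx =>
    (neg_le_neg (le_max_left _ _)).trans (hC₀ x hx)
  have hM : ∀ x ∈ Ω ∩ ball p χ.r, χ.r / 4 ≤ ‖x - p‖ → siegelHeight (χ.toFun x) ≤ M :=
    fun x hx h => (hM₀ x hx h).trans (le_max_left _ _)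
  have hC0 : 0 ≤ C := le_max_right _ _
  have hM0 : 0 ≤ M := le_max_right _ _
  set N := 16 * (C + M + 1) / (5 * χ.r ^ 2) with hNdef
  have hN : 0 ≤ N := by positivity
  refine ⟨N, M, C + N * B ^ 2, hN, fun x hx => continuousAt_barrier hΩ hN hM hC ?_ hx,
    fun x hx => ?_⟩
  · have : N * (5 * χ.r ^ 2 / 16) = C + M + 1 := by rw [hNdef]; field_simp
    linarith
  · have hxB : ‖x - p‖ < B := by simpa [dist_eq_norm] using hB hx
    rcases χ.barrier_cases (N := N) (M := M) x with ⟨h1, h2⟩ | ⟨h1, h2⟩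
    · have := hC x ⟨hx, by simp [dist_eq_norm]; linarith⟩
      have : 0 ≤ N * B ^ 2 := by positivity
      linarith
    · have h3 : ‖x - p‖ ^ 2 ≤ B ^ 2 := by gcongr
      have h4 : N * (‖x - p‖ ^ 2 - χ.r ^ 2 / 4) ≤ N * B ^ 2 := by
        gcongr; nlinarith
      linarith

/-- A Julia-type lemma: holomorphic self-maps of `Ω` tangent to the identity at `p` do not decrease
the height by more than a constant that is independent of the map. -/
theorem exists_height_sub_le [CompleteSpace V] [CompleteSpace E] (χ : SiegelChart Ω p E)
    (hΩ : IsOpen Ω) (hb : Bornology.IsBounded Ω) {T : ℝ} (hT : χ.level ≤ T) :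
    ∃ D S : ℝ, T ≤ S ∧ ∀ G : V → V, DifferentiableOn ℂ G Ω → MapsTo G Ω Ω → χ.TangentToId T G →
      ∀ Y ∈ horoball E S, G (χ.inv Y) ∈ ball p χ.r ∧
        siegelHeight Y - D ≤ siegelHeight (χ.toFun (G (χ.inv Y))) := by
  obtain ⟨N, M, D, hN, hv, hD⟩ := χ.exists_barrier hΩ hb
  have hr := χ.r_pos
  refine ⟨T + 1 + D, max (T + 1) (T + 1 + D + N * χ.r ^ 2 / 4 + M + 1),
    (by linarith [le_max_left (T + 1) (T + 1 + D + N * χ.r ^ 2 / 4 + M + 1)]), ?_⟩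
  rintro G hG hGΩ htan ⟨a, z⟩ hY
  have hY1 : T + 1 < z.re - ‖a‖ ^ 2 := (le_max_left _ _).trans_lt hY
  have hY2 : T + 1 + D + N * χ.r ^ 2 / 4 + M + 1 < z.re - ‖a‖ ^ 2 := (le_max_right _ _).trans_lt hY
  set c : ℝ := ‖a‖ ^ 2 + T + 1 with hc
  set γ : ℂ → V := fun ζ => G (χ.inv (a, ζ)) with hγdef
  have hop : IsOpen {ζ : ℂ | c - 1 < ζ.re} := isOpen_lt continuous_const continuous_re
  have hmemT : ∀ ζ : ℂ, c - 1 < ζ.re → (a, ζ) ∈ horoball E T := fun ζ hζ => by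
    change T < ζ.re - ‖a‖ ^ 2
    linarith
  have hmem : ∀ ζ : ℂ, c - 1 < ζ.re → (a, ζ) ∈ horoball E χ.level := fun ζ hζ =>
    hT.trans_lt (hmemT ζ hζ)
  have hγΩ : ∀ ζ : ℂ, c - 1 < ζ.re → γ ζ ∈ Ω := fun ζ hζ => hGΩ (χ.inv_mem _ (hmem ζ hζ)).1
  have hγd : ∀ ζ : ℂ, c - 1 < ζ.re → DifferentiableAt ℂ γ ζ := fun ζ hζ => by
    have h1 := (χ.differentiableOn_inv _ (hmem ζ hζ)).differentiableAt
      ((isOpen_horoball _).mem_nhds (hmem ζ hζ))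
    have h2 := (hG _ (χ.inv_mem _ (hmem ζ hζ)).1).differentiableAt
      (hΩ.mem_nhds (χ.inv_mem _ (hmem ζ hζ)).1)
    have h3 : DifferentiableAt ℂ (fun ζ : ℂ => (a, ζ)) ζ := by fun_prop
    exact h2.comp ζ (h1.comp ζ h3)
  have hγc : ∀ ζ : ℂ, c - 1 < ζ.re → ContinuousAt (fun ζ => χ.barrier N M (γ ζ)) ζ :=
    fun ζ hζ => ContinuousAt.comp (hv _ (hγΩ ζ hζ)) (hγd ζ hζ).continuousAt
  obtain ⟨R, hR⟩ := htan ‖a‖ 1 one_pos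
  have key := le_zero_of_hasSubMeanAt_halfPlane
    (w := fun ζ => χ.barrier N M (γ ζ) + (ζ - (c + D : ℝ)).re) (c := c)
    (B := ‖a‖ ^ 2 + 1 + (‖a‖ + 1) ^ 2 - (c + D)) (R := R)
    (fun ζ hζ => (hγc ζ (by linarith)).add (by fun_prop))
    (fun ζ hζ => by
      have := hD _ (hγΩ ζ (by linarith))
      simp only [sub_re, ofReal_re]
      linarith)
    (fun ζ hζ hζR => by
      obtain ⟨h1, h2⟩ := hR a ζ le_rfl (hmemT ζ (by linarith)) hζR
      have h3 : ‖γ ζ - p‖ ≤ χ.r / 4 := by simpa [dist_eq_norm] using (mem_ball.1 h1).le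
      have h4 : χ.barrier N M (γ ζ) = -siegelHeight (χ.toFun (γ ζ)) := by
        unfold barrier; rw [if_pos h3]
      have h5 := (norm_fst_le _).trans h2
      have h6 := (Complex.abs_re_le_norm _).trans ((norm_snd_le _).trans h2)
      simp only [Prod.fst_sub, Prod.snd_sub, sub_re] at h5 h6
      have h7 : ‖(χ.toFun (γ ζ)).1‖ ≤ ‖a‖ + 1 := by
        have := norm_le_insert' (χ.toFun (γ ζ)).1 a
        simp only [hγdef] at this ⊢
        linarith
      have h8 : ‖(χ.toFun (γ ζ)).1‖ ^ 2 ≤ (‖a‖ + 1) ^ 2 := by gcongr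
      have h9 := (abs_le.1 h6).1
      simp only [h4, siegelHeight, sub_re, ofReal_re]
      simp only [hγdef] at h8 ⊢
      nlinarith [sq_nonneg ‖a‖])
    (fun ζ hζ => by
      have hn : {ζ : ℂ | c - 1 < ζ.re} ∈ 𝓝 ζ := hop.mem_nhds (by change c - 1 < ζ.re; linarith)
      exact (hasSubMeanAt_barrier hΩ hN hv (eventually_of_mem hn hγd)
        (eventually_of_mem hn hγΩ)).add_re (Eventually.of_forall fun ζ => by fun_prop)
        (eventually_of_mem hn hγc))
    z (by linarith)
  simp only [sub_re, ofReal_re] at key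
  rcases χ.barrier_cases (N := N) (M := M) (γ z) with ⟨h1, h2⟩ | ⟨h1, h2⟩
  · refine ⟨by simp only [mem_ball, dist_eq_norm]; change ‖γ z - p‖ < _; linarith, ?_⟩
    change z.re - ‖a‖ ^ 2 - (T + 1 + D) ≤ siegelHeight (χ.toFun (γ z))
    linarith
  · exfalso
    have : 0 ≤ N * ‖γ z - p‖ ^ 2 := by positivity
    nlinarith

end SiegelChart
end Julia

section Rigidity

/-- A holomorphic map uniformly close to the identity on a ball attains the value at the centre. -/
theorem exists_eq_center_of_norm_sub_le {W : Type*} [NormedAddCommGroup W] [NormedSpace ℂ W]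
    [CompleteSpace W] {f : W → W} {c : W} {s ε : ℝ} (hε : 0 < ε) (hs : 16 * ε ≤ s)
    (hf : DifferentiableOn ℂ f (ball c s)) (hfε : ∀ y ∈ ball c s, ‖f y - y‖ ≤ ε) :
    ∃ y ∈ closedBall c (2 * ε), f y = c := by
  have hlip : ApproximatesLinearOn f (ContinuousLinearMap.id ℂ W) (closedBall c (2 * ε))
      (1 / 2) := by
    intro x hx y hy
    rw [mem_closedBall] at hx hy
    have hsub : ball y (8 * ε) ⊆ ball c s := ball_subset_ball' (by linarith)
    have hx' : x ∈ ball y (8 * ε) := by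
      rw [mem_ball]
      linarith [dist_triangle_right x y c]
    have hy' : y ∈ ball y (8 * ε) := mem_ball_self (by linarith)
    have hd : DifferentiableOn ℂ (fun u => f u - u) (ball y (8 * ε)) :=
      (hf.mono hsub).sub differentiableOn_id
    have hm : MapsTo (fun u => f u - u) (ball y (8 * ε)) (closedBall (f y - y) (2 * ε)) := by
      intro u hu
      rw [mem_closedBall, dist_eq_norm]
      linarith [norm_sub_le (f u - u) (f y - y), hfε u (hsub hu), hfε y (hsub hy')]
    have := Complex.dist_le_div_mul_dist_of_mapsTo_ball hd hm hx'
    rw [dist_eq_norm, dist_eq_norm] at this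
    have e : f x - f y - (ContinuousLinearMap.id ℂ W) (x - y) = f x - x - (f y - y) := by
      simp; abel
    rw [e]
    refine this.trans ?_
    have : 2 * ε / (8 * ε) ≤ 1 / 2 := by
      rw [div_le_div_iff₀ (by linarith) (by norm_num)]; linarith
    simpa using mul_le_mul_of_nonneg_right this (norm_nonneg (x - y))
  have hsurj := hlip.surjOn_closedBall_of_nonlinearRightInverse
    { toFun := id, nnnorm := 1, bound' := by simp, right_inv' := by intro; simp }
    (b := c) (ε := 2 * ε) (by linarith) subset_rfl
  have hc : c ∈ closedBall (f c) ((((1 : NNReal) : ℝ)⁻¹ - ((1 / 2 : NNReal) : ℝ)) * (2 * ε)) := by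
    rw [mem_closedBall, dist_comm, dist_eq_norm]
    refine (hfε c (mem_ball_self (by linarith))).trans (le_of_eq ?_)
    simp; ring
  exact hsurj hc

variable {V E : Type*} [NormedAddCommGroup V] [InnerProductSpace ℂ V]
  [NormedAddCommGroup E] [InnerProductSpace ℂ E] {Ω : Set V} {p : V} {χ : SiegelChart Ω p E}

theorem ball_subset_horoball {A T : ℝ} {a : E} {z : ℂ} (hA : 0 ≤ A) (ha : ‖a‖ ≤ A)
    (h : (a, z) ∈ horoball E (T + 1)) : ball (a, z) (1 / (2 * A + 2)) ⊆ horoball E T := by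
  rintro ⟨b, w⟩ hb
  rw [mem_ball, dist_eq_norm] at hb
  have h1 := (norm_fst_le _).trans_lt hb
  have h2 := (Complex.abs_re_le_norm _).trans_lt ((norm_snd_le _).trans_lt hb)
  simp only [Prod.fst_sub, Prod.snd_sub, sub_re] at h1 h2
  have h3 := (abs_lt.1 h2).1
  have h4 : ‖b‖ ≤ ‖a‖ + ‖b - a‖ := norm_le_insert' b a
  change T + 1 < z.re - ‖a‖ ^ 2 at h
  change T < w.re - ‖b‖ ^ 2
  set s := 1 / (2 * A + 2) with hs
  have hs1 : s * (2 * A + 2) = 1 := by rw [hs]; field_simp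
  have hs0 : 0 < s := by positivity
  have hs2 : s ≤ 1 := by nlinarith
  have h5 : ‖b‖ ^ 2 ≤ (‖a‖ + s) ^ 2 := by gcongr; linarith
  nlinarith [norm_nonneg a]

namespace SiegelChart

/-- If `F` is tangent to the identity, so is its inverse. -/
theorem TangentToId.inverse [CompleteSpace E] {T : ℝ} {F G : V → V} (h : χ.TangentToId T F)
    (hid : χ.TangentToId χ.level id) (hT : χ.level ≤ T)
    (hF : DifferentiableOn ℂ F Ω) (hFΩ : MapsTo F Ω Ω) (hGF : ∀ x ∈ Ω, G (F x) = x) :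
    χ.TangentToId (T + 1) G := by
  intro A ε hε
  have hr := χ.r_pos
  set B := max A 0
  have hB : 0 ≤ B := le_max_right _ _
  set s := 1 / (2 * B + 2) with hs
  have hs0 : 0 < s := by positivity
  have hs1 : s ≤ 1 := by rw [hs, div_le_one (by linarith)]; linarith
  set δ := min (ε / 2) (s / 16) with hδ
  have hδ0 : 0 < δ := by positivity
  have hδε : 2 * δ ≤ ε := by linarith [min_le_left (ε / 2) (s / 16)]
  have hδs : 16 * δ ≤ s := by linarith [min_le_right (ε / 2) (s / 16)]
  obtain ⟨R₁, hR₁⟩ := h (B + 1) δ hδ0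
  obtain ⟨R₂, hR₂⟩ := hid (B + 1) 1 one_pos
  refine ⟨max R₁ R₂ + 1, fun a z ha hm hz => ?_⟩
  have hsub : ball (a, z) s ⊆ horoball E T :=
    ball_subset_horoball hB (ha.trans (le_max_left _ _)) hm
  have hlev : ∀ Y ∈ horoball E T, Y ∈ horoball E χ.level := fun Y hY => hT.trans_lt hY
  have hnear : ∀ Y ∈ ball (a, z) s, ‖Y.1‖ ≤ B + 1 ∧ R₁ ≤ ‖Y.2‖ ∧ R₂ ≤ ‖Y.2‖ := by
    rintro ⟨b, w⟩ hY
    rw [mem_ball, dist_eq_norm] at hY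
    have h1 := (norm_fst_le _).trans_lt hY
    have h2 := (norm_snd_le _).trans_lt hY
    simp only [Prod.fst_sub, Prod.snd_sub] at h1 h2
    have h4 : ‖b‖ ≤ ‖a‖ + ‖b - a‖ := norm_le_insert' b a
    have h5 : ‖z‖ ≤ ‖w‖ + ‖w - z‖ := norm_le_insert w z
    have h6 : ‖a‖ ≤ B := ha.trans (le_max_left _ _)
    exact ⟨by linarith, by linarith [le_max_left R₁ R₂], by linarith [le_max_right R₁ R₂]⟩
  have hFtan : ∀ Y ∈ ball (a, z) s, F (χ.inv Y) ∈ ball p (χ.r / 4) ∧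
      ‖χ.toFun (F (χ.inv Y)) - Y‖ ≤ δ := fun Y hY =>
    hR₁ Y.1 Y.2 (hnear Y hY).1 (hsub hY) (hnear Y hY).2.1
  have hFmem : ∀ Y ∈ ball (a, z) s, F (χ.inv Y) ∈ Ω ∩ ball p χ.r := fun Y hY =>
    ⟨hFΩ (χ.inv_mem Y (hlev Y (hsub hY))).1,
      ball_subset_ball (by linarith) (hFtan Y hY).1⟩
  have hd : DifferentiableOn ℂ (fun Y => χ.toFun (F (χ.inv Y))) (ball (a, z) s) :=
    χ.differentiableOn.comp (hF.comp (χ.differentiableOn_inv.mono fun Y hY => hlev Y (hsub hY))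
      fun Y hY => (χ.inv_mem Y (hlev Y (hsub hY))).1) hFmem
  obtain ⟨Y, hY, hYeq⟩ := exists_eq_center_of_norm_sub_le hδ0 hδs hd fun Y hY => (hFtan Y hY).2
  have hYs : Y ∈ ball (a, z) s := closedBall_subset_ball (by linarith) hY
  have hinv : χ.inv (a, z) = F (χ.inv Y) := by
    have := χ.left_inv _ (hFmem Y hYs)
    rw [hYeq] at this
    exact this (hlev _ (hsub (mem_ball_self hs0)))
  have hYl := hlev Y (hsub hYs)
  rw [hinv, hGF _ (χ.inv_mem Y hYl).1, χ.right_inv Y hYl]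
  refine ⟨(hR₂ Y.1 Y.2 (hnear Y hYs).1 hYl (hnear Y hYs).2.2).1, ?_⟩
  rw [← dist_eq_norm]
  exact (mem_closedBall.1 hY).trans hδε

theorem TangentToId.asymptoticToId {T : ℝ} {F : V → V} (h : χ.TangentToId T F) :
    AsymptoticToId fun Y => χ.toFun (F (χ.inv Y)) := by
  intro A ε hε
  obtain ⟨R, hR⟩ := h A ε hε
  refine ⟨max R (T + A ^ 2 + 1), fun a z ha hz => (hR a z ha ?_ ?_).2⟩
  · change T < z.re - ‖a‖ ^ 2
    have : ‖a‖ ^ 2 ≤ A ^ 2 := by gcongr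
    linarith [le_max_right R (T + A ^ 2 + 1)]
  · linarith [le_max_left R (T + A ^ 2 + 1), Complex.re_le_norm z]

/-- An automorphism all of whose iterates are tangent to the identity at `p` is the identity on a
nonempty open set. -/
theorem exists_isOpen_eqOn_id [CompleteSpace V] [FiniteDimensional ℂ E] (χ : SiegelChart Ω p E)
    (hΩ : IsOpen Ω) (hb : Bornology.IsBounded Ω) (hid : χ.TangentToId χ.level id)
    {F G : V → V} (hF : DifferentiableOn ℂ F Ω) (hFΩ : MapsTo F Ω Ω)
    (hG : DifferentiableOn ℂ G Ω) (hGΩ : MapsTo G Ω Ω) (hGF : ∀ x ∈ Ω, G (F x) = x)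
    (htan : ∀ j : ℕ, χ.TangentToId χ.level F^[j]) :
    ∃ U ⊆ Ω, IsOpen U ∧ U.Nonempty ∧ ∀ x ∈ U, F x = x := by
  have : CompleteSpace E := FiniteDimensional.complete ℂ E
  have hit : ∀ {H : V → V}, DifferentiableOn ℂ H Ω → MapsTo H Ω Ω → ∀ j : ℕ,
      DifferentiableOn ℂ H^[j] Ω := by
    intro H hH hHΩ j
    induction j with
    | zero => exact differentiableOn_id
    | succ j ih => exact ih.comp hH hHΩ
  have hGFj : ∀ j : ℕ, ∀ x ∈ Ω, G^[j] (F^[j] x) = x := by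
    intro j
    induction j with
    | zero => exact fun x _ => rfl
    | succ j ih =>
      intro x hx
      rw [iterate_succ_apply' F, iterate_succ_apply G, hGF _ (hFΩ.iterate j hx), ih x hx]
  obtain ⟨D₁, S₁, hS₁, h₁⟩ := χ.exists_height_sub_le hΩ hb le_rfl
  obtain ⟨D₂, S₂, hS₂, h₂⟩ := χ.exists_height_sub_le (T := χ.level + 1) hΩ hb (by linarith)
  set T := max S₁ (S₂ + D₁)
  have hT₁ : ∀ Y ∈ horoball E T, Y ∈ horoball E S₁ := fun Y hY =>
    (le_max_left S₁ (S₂ + D₁)).trans_lt hY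
  have hTl : ∀ Y ∈ horoball E T, Y ∈ horoball E χ.level := fun Y hY => hS₁.trans_lt (hT₁ Y hY)
  have hinv : ∀ Y ∈ horoball E T, χ.inv Y ∈ Ω := fun Y hY => (χ.inv_mem Y (hTl Y hY)).1
  have hmem : ∀ j : ℕ, ∀ Y ∈ horoball E T, F^[j] (χ.inv Y) ∈ Ω ∩ ball p χ.r := fun j Y hY =>
    ⟨hFΩ.iterate j (hinv Y hY),
      (h₁ _ (hit hF hFΩ j) (hFΩ.iterate j) (htan j) Y (hT₁ Y hY)).1⟩
  have hlow : ∀ j : ℕ, ∀ Y ∈ horoball E T,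
      siegelHeight Y - D₁ ≤ siegelHeight (χ.toFun (F^[j] (χ.inv Y))) := fun j Y hY =>
    (h₁ _ (hit hF hFΩ j) (hFΩ.iterate j) (htan j) Y (hT₁ Y hY)).2
  have himg : ∀ j : ℕ, ∀ Y ∈ horoball E T, χ.toFun (F^[j] (χ.inv Y)) ∈ horoball E S₂ := by
    intro j Y hY
    have h3 := hlow j Y hY
    have h4 : S₂ + D₁ < siegelHeight Y := (le_max_right S₁ (S₂ + D₁)).trans_lt hY
    change S₂ < siegelHeight (χ.toFun (F^[j] (χ.inv Y)))
    linarith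
  have hback : ∀ j : ℕ, ∀ Y ∈ horoball E T,
      χ.inv (χ.toFun (F^[j] (χ.inv Y))) = F^[j] (χ.inv Y) := fun j Y hY =>
    χ.left_inv _ (hmem j Y hY)
      ((show χ.level ≤ S₂ by linarith).trans_lt (himg j Y hY))
  obtain ⟨X, hX⟩ := eq_id_of_nearlyHeightPreserving_iterates (T := T) (C := max D₁ D₂)
    (G := fun j Y => χ.toFun (F^[j] (χ.inv Y)))
    (fun j => ⟨χ.differentiableOn.comp ((hit hF hFΩ j).comp
      (χ.differentiableOn_inv.mono hTl) hinv) (hmem j), fun Y hY => by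
        have hup := (h₂ _ (hit hG hGΩ j) (hGΩ.iterate j)
          ((htan j).inverse hid le_rfl (hit hF hFΩ j) (hFΩ.iterate j) (hGFj j))
          _ (himg j Y hY)).2
        rw [hback j Y hY, hGFj j _ (hinv Y hY), χ.right_inv Y (hTl Y hY)] at hup
        rw [abs_le]
        constructor
        · linarith [hlow j Y hY, le_max_left D₁ D₂]
        · linarith [le_max_right D₁ D₂]⟩)
    (fun j => (htan j).asymptoticToId)
    (fun Y hY => χ.right_inv Y (hTl Y hY))
    (fun j Y hY => by
      rw [hback 1 Y hY]
      rfl)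
    (fun j Y hY => by
      rw [hback j Y hY, iterate_succ_apply']
      rfl)
  set W : Set (E × ℂ) := {Y | ‖Y.1‖ < 1 / 2} ∩ ({Y | X < Y.2.re} ∩ horoball E T) with hW
  have hWo : IsOpen W := (isOpen_lt (by fun_prop) continuous_const).inter
    ((isOpen_lt continuous_const (by fun_prop)).inter (isOpen_horoball T))
  refine ⟨(Ω ∩ ball p χ.r) ∩ χ.toFun ⁻¹' W, fun x hx => hx.1.1,
    χ.differentiableOn.continuousOn.isOpen_inter_preimage (hΩ.inter isOpen_ball) hWo, ?_, ?_⟩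
  · have hY : ((0 : E), ((max X T + 1 : ℝ) : ℂ)) ∈ W := by
      refine ⟨by simp, ?_, ?_⟩
      · change X < ((max X T + 1 : ℝ) : ℂ).re
        rw [ofReal_re]; linarith [le_max_left X T]
      · change T < ((max X T + 1 : ℝ) : ℂ).re - ‖(0 : E)‖ ^ 2
        rw [ofReal_re, norm_zero]; linarith [le_max_right X T]
    refine ⟨_, χ.inv_mem _ (hTl _ hY.2.2), ?_⟩
    rwa [mem_preimage, χ.right_inv _ (hTl _ hY.2.2)]
  · rintro x ⟨hx, hxW⟩
    have h3 := hX (χ.toFun x).1 (χ.toFun x).2 hxW.1 hxW.2.1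
    have h4 := hback 1 _ hxW.2.2
    simp only [iterate_one, Prod.mk.eta] at h3 h4
    rwa [h3, χ.left_inv x hx (hTl _ hxW.2.2), eq_comm] at h4

end SiegelChart
end Rigidity

section NormalForm

/-- The inversion exchanging the origin and infinity in the Siegel model. -/
def siegelInversion {E : Type*} [AddCommGroup E] [Module ℂ E] (w : E × ℂ) : E × ℂ :=
  (w.2⁻¹ • w.1, w.2⁻¹)

theorem siegelInversion_siegelInversion {E : Type*} [AddCommGroup E] [Module ℂ E] {w : E × ℂ}
    (hw : w.2 ≠ 0) : siegelInversion (siegelInversion w) = w := by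
  ext1
  · simp [siegelInversion, smul_smul, hw]
  · simp [siegelInversion]

variable {V E : Type*} [NormedAddCommGroup V] [InnerProductSpace ℂ V]
  [NormedAddCommGroup E] [InnerProductSpace ℂ E]

theorem differentiableAt_siegelInversion {w : E × ℂ} (hw : w.2 ≠ 0) :
    DifferentiableAt ℂ (siegelInversion : E × ℂ → E × ℂ) w := by
  have h : DifferentiableAt ℂ (fun w : E × ℂ => w.2⁻¹) w := differentiableAt_snd.inv hw
  exact (h.smul differentiableAt_fst).prodMk h

theorem siegelHeight_siegelInversion_mul {w : E × ℂ} (hw : w.2 ≠ 0) :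
    siegelHeight (siegelInversion w) * ‖w.2‖ ^ 2 = w.2.re - ‖w.1‖ ^ 2 := by
  have h : ‖w.2‖ ≠ 0 := norm_ne_zero_iff.2 hw
  simp only [siegelHeight, siegelInversion, norm_smul, norm_inv, inv_re, normSq_eq_norm_sq]
  field_simp

/-- Holomorphic coordinates centred at a boundary point `p` of `Ω` in which `Ω` agrees with the
Siegel model up to terms of weight at least two. -/
structure SiegelNormalForm (Ω : Set V) (p : V) (E : Type*) [NormedAddCommGroup E]
    [InnerProductSpace ℂ E] where
  /-- the coordinates -/
  toFun : V → E × ℂ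
  /-- the inverse map -/
  inv : E × ℂ → V
  /-- the radius of definition of the coordinates -/
  r : ℝ
  /-- the radius of definition of the inverse -/
  κ : ℝ
  /-- the constant in the estimate of the terms of higher weight -/
  C : ℝ
  /-- the Lipschitz constant of the inverse at the origin -/
  K : ℝ
  /-- the Lipschitz constant of the coordinates -/
  L : ℝ
  r_pos : 0 < r
  κ_pos : 0 < κ
  C_nonneg : 0 ≤ C
  K_pos : 0 < K
  L_nonneg : 0 ≤ L
  differentiableOn : DifferentiableOn ℂ toFun (ball 0 r)
  injOn : InjOn toFun (ball 0 r)
  lipschitz : ∀ x ∈ ball 0 r, ∀ y ∈ ball 0 r, ‖toFun x - toFun y‖ ≤ L * ‖x - y‖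
  norm_le : ∀ x ∈ ball 0 r, ‖x‖ ≤ K * ‖toFun x‖
  differentiableOn_inv : DifferentiableOn ℂ inv (ball 0 κ)
  inv_mem : ∀ w ∈ ball 0 κ, inv w ∈ ball 0 r
  right_inv : ∀ w ∈ ball 0 κ, toFun (inv w) = w
  small : ∀ x ∈ ball 0 r, (2 * C + 1) * ‖toFun x‖ ≤ 1
  notMem : p ∉ Ω
  le_of_mem : ∀ x ∈ ball 0 r, p + x ∈ Ω →
    ‖(toFun x).1‖ ^ 2 - C * (‖(toFun x).2‖ ^ 2 + ‖(toFun x).1‖ ^ 4) ≤ (toFun x).2.re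
  mem_of_lt : ∀ x ∈ ball 0 r,
    C * (‖(toFun x).2‖ ^ 2 + ‖(toFun x).1‖ ^ 4) < (toFun x).2.re - ‖(toFun x).1‖ ^ 2 → p + x ∈ Ω

namespace SiegelNormalForm

variable {Ω : Set V} {p : V} (ν : SiegelNormalForm Ω p E)

theorem norm_toFun_le_one {x : V} (hx : x ∈ ball 0 ν.r) : ‖ν.toFun x‖ ≤ 1 := by
  nlinarith [ν.small x hx, ν.C_nonneg, norm_nonneg (ν.toFun x),
    mul_nonneg ν.C_nonneg (norm_nonneg (ν.toFun x))]

theorem norm_fst_sq_le {x : V} (hx : x ∈ ball 0 ν.r) (hΩ : p + x ∈ Ω) :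
    ‖(ν.toFun x).1‖ ^ 2 ≤ 3 * ‖(ν.toFun x).2‖ := by
  have hC := ν.C_nonneg
  have h0 := ν.norm_toFun_le_one hx
  have h1 := ν.small x hx
  have h2 := ν.le_of_mem x hx hΩ
  have h3 := Complex.re_le_norm (ν.toFun x).2
  have h4 := norm_fst_le (ν.toFun x)
  have h5 := norm_snd_le (ν.toFun x)
  have hu := norm_nonneg (ν.toFun x).1
  have hv := norm_nonneg (ν.toFun x).2
  set t := ‖ν.toFun x‖
  set u := ‖(ν.toFun x).1‖
  set v := ‖(ν.toFun x).2‖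
  have hCt : ν.C * t ≤ 1 / 2 := by linarith
  have h6 : ν.C * v ≤ 1 / 2 := (mul_le_mul_of_nonneg_left h5 hC).trans hCt
  have h7 : ν.C * u ≤ 1 / 2 := (mul_le_mul_of_nonneg_left h4 hC).trans hCt
  have h8 : ν.C * u * u ≤ 1 / 2 * 1 := mul_le_mul h7 (h4.trans h0) hu (by norm_num)
  have h9 : ν.C * u * u * u ^ 2 ≤ 1 / 2 * 1 * u ^ 2 :=
    mul_le_mul_of_nonneg_right h8 (sq_nonneg u)
  have h10 : ν.C * v * v ≤ 1 / 2 * v := mul_le_mul_of_nonneg_right h6 hv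
  nlinarith

theorem snd_ne_zero {x : V} (hx : x ∈ ball 0 ν.r) (hΩ : p + x ∈ Ω) : (ν.toFun x).2 ≠ 0 := by
  intro h
  have h1 := ν.norm_fst_sq_le hx hΩ
  rw [h, norm_zero, mul_zero] at h1
  have h2 : (ν.toFun x).1 = 0 := by
    rw [← norm_eq_zero]
    exact pow_eq_zero_iff two_ne_zero |>.1 (le_antisymm h1 (sq_nonneg _))
  have h3 := ν.norm_le x hx
  rw [show ν.toFun x = 0 from Prod.ext h2 h, norm_zero, mul_zero, norm_le_zero_iff] at h3
  rw [h3, add_zero] at hΩ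
  exact ν.notMem hΩ

theorem neg_le_siegelHeight {x : V} (hx : x ∈ ball 0 ν.r) (hΩ : p + x ∈ Ω) :
    -(10 * ν.C) ≤ siegelHeight (siegelInversion (ν.toFun x)) := by
  have h1 := ν.snd_ne_zero hx hΩ
  have h2 := siegelHeight_siegelInversion_mul h1
  have h3 := ν.norm_fst_sq_le hx hΩ
  have h4 := ν.le_of_mem x hx hΩ
  have hv : 0 < ‖(ν.toFun x).2‖ := norm_pos_iff.2 h1
  have h5 : ‖(ν.toFun x).1‖ ^ 4 ≤ 9 * ‖(ν.toFun x).2‖ ^ 2 := by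
    nlinarith [sq_nonneg ‖(ν.toFun x).1‖]
  have h6 := mul_le_mul_of_nonneg_left h5 ν.C_nonneg
  refine le_of_mul_le_mul_right ?_ (pow_pos hv 2)
  rw [h2]
  nlinarith

theorem siegelHeight_le {x : V} (hx : x ∈ ball 0 ν.r) (hΩ : p + x ∈ Ω) (hxr : ν.r / 4 ≤ ‖x‖) :
    siegelHeight (siegelInversion (ν.toFun x)) ≤ 48 * ν.K ^ 2 / ν.r ^ 2 := by
  have h1 := ν.snd_ne_zero hx hΩ
  have h2 := siegelHeight_siegelInversion_mul h1
  have h3 := ν.norm_fst_sq_le hx hΩ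
  have h0 := ν.norm_toFun_le_one hx
  have hv : 0 < ‖(ν.toFun x).2‖ := norm_pos_iff.2 h1
  have hr := ν.r_pos
  have hK := ν.K_pos
  have h4 : ‖ν.toFun x‖ ^ 2 ≤ 3 * ‖(ν.toFun x).2‖ := by
    have h5 := norm_snd_le (ν.toFun x)
    rcases max_choice ‖(ν.toFun x).1‖ ‖(ν.toFun x).2‖ with h | h
    · rw [Prod.norm_def, h]; exact h3
    · have h6 : ‖ν.toFun x‖ = ‖(ν.toFun x).2‖ := by rw [Prod.norm_def, h]
      nlinarith
  have h5 : ν.r / 4 ≤ ν.K * ‖ν.toFun x‖ := hxr.trans (ν.norm_le x hx)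
  have h6 : (ν.r / 4) ^ 2 ≤ (ν.K * ‖ν.toFun x‖) ^ 2 := by gcongr
  have h7 : ν.r ^ 2 ≤ 48 * ν.K ^ 2 * ‖(ν.toFun x).2‖ := by
    have := mul_le_mul_of_nonneg_left h4 (sq_nonneg ν.K)
    nlinarith
  have h8 : siegelHeight (siegelInversion (ν.toFun x)) * ‖(ν.toFun x).2‖ ≤ 1 := by
    refine le_of_mul_le_mul_right ?_ hv
    nlinarith [Complex.re_le_norm (ν.toFun x).2, sq_nonneg ‖(ν.toFun x).1‖]
  rw [le_div_iff₀ (by positivity)]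
  by_cases h9 : 0 ≤ siegelHeight (siegelInversion (ν.toFun x))
  · calc _ ≤ siegelHeight (siegelInversion (ν.toFun x)) * (48 * ν.K ^ 2 * ‖(ν.toFun x).2‖) := by
          gcongr
      _ = 48 * ν.K ^ 2 * (siegelHeight (siegelInversion (ν.toFun x)) * ‖(ν.toFun x).2‖) := by ring
      _ ≤ 48 * ν.K ^ 2 * 1 := by gcongr
      _ = _ := by ring
  · push Not at h9
    nlinarith [sq_nonneg ν.K, pow_pos hr 2]

/-- The level above which the chart at infinity is defined. -/
def level : ℝ := 2 * ν.C + 1 + 1 / ν.κ + 1 / ν.κ ^ 2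

theorem norm_fst_sq_le_of_mem_horoball {T : ℝ} (hT : 0 ≤ T) {Y : E × ℂ} (hY : Y ∈ horoball E T) :
    Y.2 ≠ 0 ∧ T < ‖Y.2‖ ∧ ‖(siegelInversion Y).1‖ ^ 2 ≤ ‖Y.2‖⁻¹ := by
  have h1 : T < Y.2.re - ‖Y.1‖ ^ 2 := hY
  have h2 := Complex.re_le_norm Y.2
  have h3 : T < ‖Y.2‖ := by linarith [sq_nonneg ‖Y.1‖]
  have h4 : 0 < ‖Y.2‖ := hT.trans_lt h3
  refine ⟨norm_pos_iff.1 h4, h3, ?_⟩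
  simp only [siegelInversion, norm_smul, norm_inv]
  rw [mul_pow, inv_pow]
  calc (‖Y.2‖ ^ 2)⁻¹ * ‖Y.1‖ ^ 2 ≤ (‖Y.2‖ ^ 2)⁻¹ * ‖Y.2‖ := by gcongr; linarith
    _ = ‖Y.2‖⁻¹ := by field_simp

theorem siegelInversion_mem_ball {Y : E × ℂ} (hY : Y ∈ horoball E ν.level) :
    siegelInversion Y ∈ ball 0 ν.κ := by
  have hκ := ν.κ_pos
  have hC := ν.C_nonneg
  have hl : 0 ≤ ν.level := by unfold level; positivity
  obtain ⟨h1, h2, h3⟩ := norm_fst_sq_le_of_mem_horoball hl hY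
  have h4 : 0 < ‖Y.2‖ := norm_pos_iff.2 h1
  have p1 : 0 < 1 / ν.κ := by positivity
  have p2 : 0 < 1 / ν.κ ^ 2 := by positivity
  unfold level at h2
  have h5 : ‖Y.2‖⁻¹ < ν.κ := by
    rw [inv_lt_comm₀ h4 hκ, ← one_div]; linarith
  have h6 : ‖Y.2‖⁻¹ < ν.κ ^ 2 := by
    rw [inv_lt_comm₀ h4 (by positivity), ← one_div]; linarith
  rw [mem_ball_zero_iff, Prod.norm_def, max_lt_iff]
  refine ⟨lt_of_pow_lt_pow_left₀ 2 hκ.le (h3.trans_lt h6), ?_⟩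
  simpa [siegelInversion] using h5

theorem inv_mem_of_mem_horoball {Y : E × ℂ} (hY : Y ∈ horoball E ν.level) :
    p + ν.inv (siegelInversion Y) ∈ Ω := by
  have hκ := ν.κ_pos
  have hC := ν.C_nonneg
  have hl : 0 ≤ ν.level := by unfold level; positivity
  have hb := ν.siegelInversion_mem_ball hY
  obtain ⟨h1, h2, h3⟩ := norm_fst_sq_le_of_mem_horoball hl hY
  refine ν.mem_of_lt _ (ν.inv_mem _ hb) ?_
  rw [ν.right_inv _ hb]
  have h4 : (siegelInversion Y).2 ≠ 0 := by simpa [siegelInversion] using h1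
  have h5 := siegelHeight_siegelInversion_mul h4
  rw [siegelInversion_siegelInversion h1] at h5
  rw [← h5]
  have h6 : ‖Y.2‖⁻¹ = ‖(siegelInversion Y).2‖ := by simp [siegelInversion]
  rw [h6] at h3
  have h7 : 0 < ‖(siegelInversion Y).2‖ := norm_pos_iff.2 h4
  have h8 : ‖(siegelInversion Y).1‖ ^ 4 ≤ ‖(siegelInversion Y).2‖ ^ 2 := by
    nlinarith [sq_nonneg ‖(siegelInversion Y).1‖]
  have h9 : 2 * ν.C < siegelHeight Y := by
    have p1 : 0 < 1 / ν.κ := div_pos one_pos hκ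
    have p2 : 0 < 1 / ν.κ ^ 2 := by positivity
    have : ν.level < siegelHeight Y := hY
    unfold level at this
    linarith
  calc _ ≤ ν.C * (‖(siegelInversion Y).2‖ ^ 2 + ‖(siegelInversion Y).2‖ ^ 2) := by gcongr
    _ = 2 * ν.C * ‖(siegelInversion Y).2‖ ^ 2 := by ring
    _ < _ := by gcongr

/-- The Siegel chart at infinity obtained from a normal form by inversion. -/
def chart : SiegelChart Ω p E where
  toFun x := siegelInversion (ν.toFun (x - p))
  inv Y := p + ν.inv (siegelInversion Y)
  r := ν.r
  level := ν.level
  r_pos := ν.r_pos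
  differentiableOn_inv Y hY := by
    have hb := ν.siegelInversion_mem_ball hY
    have hl : 0 ≤ ν.level := by
      have := ν.κ_pos; have := ν.C_nonneg; unfold level; positivity
    have h1 := (ν.differentiableOn_inv _ hb).differentiableAt (isOpen_ball.mem_nhds hb)
    exact ((h1.comp Y (differentiableAt_siegelInversion
      (norm_fst_sq_le_of_mem_horoball hl hY).1)).const_add p).differentiableWithinAt
  inv_mem Y hY := ⟨ν.inv_mem_of_mem_horoball hY, by
    simpa [dist_eq_norm] using ν.inv_mem _ (ν.siegelInversion_mem_ball hY)⟩
  right_inv Y hY := by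
    have hl : 0 ≤ ν.level := by
      have := ν.κ_pos; have := ν.C_nonneg; unfold level; positivity
    rw [add_sub_cancel_left, ν.right_inv _ (ν.siegelInversion_mem_ball hY),
      siegelInversion_siegelInversion (norm_fst_sq_le_of_mem_horoball hl hY).1]
  differentiableOn x hx := by
    have hx' : x - p ∈ ball 0 ν.r := by simpa [dist_eq_norm] using hx.2
    have h1 := (ν.differentiableOn _ hx').differentiableAt (isOpen_ball.mem_nhds hx')
    exact ((differentiableAt_siegelInversion (ν.snd_ne_zero hx' (by simpa using hx.1))).comp x
      (h1.comp x (differentiableAt_id.sub_const p))).differentiableWithinAt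
  left_inv x hx hY := by
    have hx' : x - p ∈ ball 0 ν.r := by simpa [dist_eq_norm] using hx.2
    have hb := ν.siegelInversion_mem_ball hY
    rw [siegelInversion_siegelInversion (ν.snd_ne_zero hx' (by simpa using hx.1))] at hb ⊢
    rw [ν.injOn (ν.inv_mem _ hb) hx' (ν.right_inv _ hb)]
    abel
  height_bddBelow := ⟨10 * ν.C, fun x hx => ν.neg_le_siegelHeight
    (by simpa [dist_eq_norm] using hx.2) (by simpa using hx.1)⟩
  height_bddAbove := ⟨48 * ν.K ^ 2 / ν.r ^ 2, fun x hx h => ν.siegelHeight_le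
    (by simpa [dist_eq_norm] using hx.2) (by simpa using hx.1) h⟩

/-- The displacement in the chart at infinity of a perturbation near the origin. -/
theorem norm_siegelInversion_sub_le {a : E} {z : ℂ} {w : E × ℂ} {η B : ℝ} (hz : 1 ≤ ‖z‖)
    (hη : η ≤ 1 / 2) (haB : 1 + ‖a‖ ≤ B) (hw : ‖w - siegelInversion (a, z)‖ ≤ η / ‖z‖ ^ 2) :
    ‖siegelInversion w - (a, z)‖ ≤ 2 * η * B := by
  have hz0 : 0 < ‖z‖ := by linarith
  have hzne : z ≠ 0 := norm_pos_iff.1 hz0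
  have h1 : ‖w.1 - z⁻¹ • a‖ ≤ η / ‖z‖ ^ 2 := (norm_fst_le _).trans hw
  have h2 : ‖w.2 - z⁻¹‖ ≤ η / ‖z‖ ^ 2 := (norm_snd_le _).trans hw
  have hη0 : 0 ≤ η := by
    have : 0 ≤ η / ‖z‖ ^ 2 := (norm_nonneg _).trans h1
    by_contra! h
    exact absurd this (not_le.2 (div_neg_of_neg_of_pos h (by positivity)))
  have h3 : (2 * ‖z‖)⁻¹ ≤ ‖w.2‖ := by
    have h4 : ‖z⁻¹‖ ≤ ‖w.2‖ + ‖w.2 - z⁻¹‖ := norm_le_insert _ _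
    rw [norm_inv] at h4
    have h5 : η / ‖z‖ ^ 2 ≤ (2 * ‖z‖)⁻¹ := by
      rw [div_le_iff₀ (by positivity)]
      field_simp
      nlinarith
    have h6 : ‖z‖⁻¹ = 2 * (2 * ‖z‖)⁻¹ := by field_simp
    linarith
  have hw0 : 0 < ‖w.2‖ := lt_of_lt_of_le (by positivity) h3
  have hwne : w.2 ≠ 0 := norm_pos_iff.1 hw0
  have h4 : ‖w.2⁻¹‖ ≤ 2 * ‖z‖ := by
    rw [norm_inv]
    exact inv_le_of_inv_le₀ (by positivity) h3
  have hB : 1 ≤ B := by linarith [norm_nonneg a]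
  rw [Prod.norm_def, max_le_iff]
  constructor
  · have e : (siegelInversion w - (a, z)).1 = w.2⁻¹ • ((w.1 - z⁻¹ • a) - (w.2 - z⁻¹) • a) := by
      simp only [siegelInversion, Prod.fst_sub, sub_smul, smul_sub, smul_smul,
        inv_mul_cancel₀ hwne, one_smul]
      abel
    rw [e, norm_smul]
    calc ‖w.2⁻¹‖ * ‖(w.1 - z⁻¹ • a) - (w.2 - z⁻¹) • a‖
        ≤ (2 * ‖z‖) * (η / ‖z‖ ^ 2 + η / ‖z‖ ^ 2 * ‖a‖) := by
          gcongr
          refine (norm_sub_le _ _).trans ?_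
          rw [norm_smul]
          gcongr
      _ = 2 * η * (1 + ‖a‖) / ‖z‖ := by field_simp
      _ ≤ 2 * η * (1 + ‖a‖) / 1 := by gcongr
      _ ≤ 2 * η * B := by rw [div_one]; gcongr
  · have e : (siegelInversion w - (a, z)).2 = w.2⁻¹ * (z * -(w.2 - z⁻¹)) := by
      simp only [siegelInversion, Prod.snd_sub]
      field_simp
      ring
    rw [e, norm_mul, norm_mul, norm_neg]
    calc ‖w.2⁻¹‖ * (‖z‖ * ‖w.2 - z⁻¹‖) ≤ (2 * ‖z‖) * (‖z‖ * (η / ‖z‖ ^ 2)) := by gcongr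
      _ = 2 * η * 1 := by field_simp
      _ ≤ 2 * η * B := by gcongr

/-- Second order contact with the identity at `p` means tangency to the identity at infinity. -/
theorem tangentToId_chart {F : V → V}
    (hF : Tendsto (fun x => ‖F x - x‖ / ‖x - p‖ ^ 2) (𝓝[Ω] p) (𝓝 0)) :
    ν.chart.TangentToId ν.chart.level F := by
  intro A ε hε
  have hr := ν.r_pos
  have hK := ν.K_pos
  have hL := ν.L_nonneg
  set B := max A 0 + 1 with hBdef
  have hB : 1 ≤ B := by linarith [le_max_right A 0]
  set c := ν.K * B with hc
  have hc0 : 0 < c := by positivity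
  set η := min (1 / 2) (ε / (2 * B)) with hη
  have hη0 : 0 < η := by positivity
  set δ := min 1 (η / (ν.L * c ^ 2 + 1)) with hδ
  have hδ0 : 0 < δ := by positivity
  have hδη : ν.L * (δ * c ^ 2) ≤ η := by
    have h1 : δ ≤ η / (ν.L * c ^ 2 + 1) := min_le_right _ _
    rw [le_div_iff₀ (by positivity)] at h1
    nlinarith
  obtain ⟨ρ, hρ, hρF⟩ : ∃ ρ > 0, ∀ x ∈ Ω, dist x p < ρ → ‖F x - x‖ ≤ δ * ‖x - p‖ ^ 2 := by
    have h1 := hF.eventually_lt_const hδ0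
    rw [eventually_nhdsWithin_iff, Metric.eventually_nhds_iff] at h1
    obtain ⟨ρ, hρ, h⟩ := h1
    refine ⟨ρ, hρ, fun x hx hd => ?_⟩
    have hne : 0 < ‖x - p‖ := norm_pos_iff.2 (sub_ne_zero.2 fun e => ν.notMem (e ▸ hx))
    exact ((div_lt_iff₀ (by positivity)).1 (h hd hx)).le
  set τ := min ρ (min (ν.r / 8) 1) with hτ
  have hτ0 : 0 < τ := by positivity
  refine ⟨1 + c / τ, fun a z ha hY hz => ?_⟩
  have hcτ : 0 < c / τ := by positivity
  have hz1 : 1 ≤ ‖z‖ := by linarith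
  have hz0 : 0 < ‖z‖ := by linarith
  have haB : 1 + ‖a‖ ≤ B := by linarith [le_max_left A 0]
  change F (p + ν.inv (siegelInversion (a, z))) ∈ ball p (ν.r / 4) ∧
    ‖siegelInversion (ν.toFun (F (p + ν.inv (siegelInversion (a, z))) - p)) - (a, z)‖ ≤ ε
  have hb := ν.siegelInversion_mem_ball hY
  have hΩ := ν.inv_mem_of_mem_horoball hY
  have hζr := ν.inv_mem _ hb
  have hζ : ‖ν.inv (siegelInversion (a, z))‖ ≤ c / ‖z‖ := by
    refine (ν.norm_le _ hζr).trans ?_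
    rw [ν.right_inv _ hb, hc, mul_div_assoc]
    gcongr
    rw [siegelInversion, Prod.norm_def, norm_smul, norm_inv, max_le_iff, ← div_eq_inv_mul,
      ← one_div]
    constructor
    · gcongr; linarith
    · gcongr
  have hw := ν.right_inv _ hb
  set ζ := ν.inv (siegelInversion (a, z))
  have hζτ : ‖ζ‖ < τ := by
    refine hζ.trans_lt ?_
    rw [div_lt_iff₀ hz0]
    have : c / τ < ‖z‖ := by linarith
    rwa [div_lt_iff₀ hτ0, mul_comm] at this
  have hτ1 : τ ≤ ρ := min_le_left _ _
  have hτ2 : τ ≤ ν.r / 8 := (min_le_right _ _).trans (min_le_left _ _)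
  have hτ3 : τ ≤ 1 := (min_le_right _ _).trans (min_le_right _ _)
  have hFd := hρF _ hΩ (by simpa [dist_eq_norm] using hζτ.trans_le hτ1)
  rw [add_sub_cancel_left] at hFd
  have hFd2 : ‖F (p + ζ) - p - ζ‖ ≤ δ * ‖ζ‖ ^ 2 := by rwa [sub_sub]
  have hδ1 : δ ≤ 1 := min_le_left _ _
  have hFn : ‖F (p + ζ) - p‖ < ν.r / 4 := by
    have h1 : ‖F (p + ζ) - p‖ ≤ ‖ζ‖ + ‖F (p + ζ) - p - ζ‖ := norm_le_insert' _ _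
    have h2 : δ * ‖ζ‖ ^ 2 ≤ 1 * ‖ζ‖ := by
      have := norm_nonneg ζ
      exact mul_le_mul hδ1 (by nlinarith) (by positivity) (by norm_num)
    linarith
  refine ⟨by simpa [dist_eq_norm] using hFn, ?_⟩
  have key := norm_siegelInversion_sub_le (a := a) (w := ν.toFun (F (p + ζ) - p)) hz1
    (min_le_left _ _ : η ≤ 1 / 2) haB (by
      rw [← hw]
      refine (ν.lipschitz _ (by simp; linarith) _ hζr).trans ?_
      calc ν.L * ‖F (p + ζ) - p - ζ‖ ≤ ν.L * (δ * (c / ‖z‖) ^ 2) := by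
            gcongr
            exact hFd2.trans (by gcongr)
        _ = ν.L * (δ * c ^ 2) / ‖z‖ ^ 2 := by ring
        _ ≤ η / ‖z‖ ^ 2 := by gcongr)
  refine key.trans ?_
  have h1 : η ≤ ε / (2 * B) := min_le_right _ _
  rw [le_div_iff₀ (by positivity)] at h1
  linarith

end SiegelNormalForm

/-- Second order contact with the identity is preserved by iteration. -/
theorem tendsto_iterate_sub_div {Ω : Set V} {p : V} {F : V → V} (hp : p ∉ Ω) (hFΩ : MapsTo F Ω Ω)
    (hF : Tendsto (fun x => ‖F x - x‖ / ‖x - p‖ ^ 2) (𝓝[Ω] p) (𝓝 0)) (j : ℕ) :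
    Tendsto (fun x => ‖F^[j] x - x‖ / ‖x - p‖ ^ 2) (𝓝[Ω] p) (𝓝 0) := by
  have hne : ∀ᶠ x in 𝓝[Ω] p, ‖x - p‖ ^ 2 = 0 → ‖F x - x‖ = 0 := by
    filter_upwards [self_mem_nhdsWithin] with x hx h
    have : x = p := by simpa [sub_eq_zero] using h
    exact absurd (this ▸ hx) hp
  have ho : (fun x => F x - x) =o[𝓝[Ω] p] fun x => ‖x - p‖ ^ 2 :=
    Asymptotics.isLittleO_norm_left.1 ((Asymptotics.isLittleO_iff_tendsto' hne).2 hF)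
  have hsub : Tendsto (fun x => x - p) (𝓝[Ω] p) (𝓝 0) := by
    have : Tendsto (fun x => x - p) (𝓝 p) (𝓝 (p - p)) :=
      (continuous_id.sub continuous_const).tendsto p
    rw [sub_self] at this
    exact this.mono_left nhdsWithin_le_nhds
  have h2 : (fun x => ‖x - p‖ ^ 2) =O[𝓝[Ω] p] fun x => x - p :=
    ((Asymptotics.isLittleO_norm_pow_id (E' := V) one_lt_two).comp_tendsto hsub).isBigO
  have hFp : (fun x => F x - p) =O[𝓝[Ω] p] fun x => x - p := by
    refine ((ho.isBigO.trans h2).add (Asymptotics.isBigO_refl _ _)).congr_left fun x => ?_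
    abel
  have hFt : Tendsto F (𝓝[Ω] p) (𝓝[Ω] p) := by
    refine tendsto_nhdsWithin_iff.2 ⟨?_, eventually_nhdsWithin_of_forall hFΩ⟩
    simpa using (hFp.trans_tendsto hsub).add_const p
  have main : (fun x => F^[j] x - x) =o[𝓝[Ω] p] fun x => ‖x - p‖ ^ 2 := by
    induction j with
    | zero => simp
    | succ j ih =>
      refine (((ih.comp_tendsto hFt).trans_isBigO (hFp.norm_norm.pow 2)).add ho).congr_left
        fun x => ?_
      simp [iterate_succ_apply]
  exact main.norm_left.tendsto_div_nhds_zero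

end NormalForm

section Taylor

variable {V : Type*} [NormedAddCommGroup V] [NormedSpace ℝ V]

theorem iteratedFDeriv_three_apply {G : Type*} [NormedAddCommGroup G] [NormedSpace ℝ G] (f : V → G)
    (x : V) (m : Fin 3 → V) :
    iteratedFDeriv ℝ 3 f x m = fderiv ℝ (fderiv ℝ (fderiv ℝ f)) x (m 0) (m 1) (m 2) := by
  rw [iteratedFDeriv_succ_apply_right, iteratedFDeriv_two_apply]
  rfl

theorem taylor_three_isBigO {f : V → ℝ} (hf : ContDiff ℝ 4 f) (x : V) :
    (fun y => f (x + y) - (f x + fderiv ℝ f x y + 1 / 2 * fderiv ℝ (fderiv ℝ f) x y y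
      + 1 / 6 * fderiv ℝ (fderiv ℝ (fderiv ℝ f)) x y y y)) =O[𝓝 0] fun y => ‖y‖ ^ 4 := by
  have hc : Continuous (iteratedFDeriv ℝ 4 f) := hf.continuous_iteratedFDeriv le_rfl
  obtain ⟨δ, hδ, hB⟩ := Metric.continuousAt_iff.1 (hc.continuousAt (x := x)) 1 one_pos
  set B := ‖iteratedFDeriv ℝ 4 f x‖ + 1
  refine Asymptotics.IsBigO.of_bound B ?_
  filter_upwards [ball_mem_nhds (0 : V) hδ] with y hy
  rw [mem_ball_zero_iff] at hy
  have h := map_add_eq_sum_add_integral_iteratedFDeriv (n := 3) (x := x) (y := y)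
    fun t _ => by exact_mod_cast hf.contDiffAt
  simp only [Finset.sum_range_succ, Finset.sum_range_zero, iteratedFDeriv_zero_apply,
    iteratedFDeriv_one_apply, iteratedFDeriv_two_apply, iteratedFDeriv_three_apply] at h
  have h2 : ‖∫ t in (0 : ℝ)..1, (1 - t) ^ 3 • iteratedFDeriv ℝ (3 + 1) f (x + t • y) fun _ ↦ y‖
      ≤ B * ‖y‖ ^ 4 * |1 - 0| := by
    refine intervalIntegral.norm_integral_le_of_norm_le_const fun t ht => ?_
    rw [uIoc_of_le zero_le_one] at ht
    have h3 : ‖iteratedFDeriv ℝ 4 f (x + t • y)‖ ≤ B := by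
      have h4 : dist (x + t • y) x < δ := by
        rw [dist_self_add_left, norm_smul, Real.norm_of_nonneg ht.1.le]
        nlinarith [norm_nonneg y, ht.2]
      have h5 := hB h4
      rw [dist_eq_norm] at h5
      linarith [norm_le_insert' (iteratedFDeriv ℝ 4 f (x + t • y)) (iteratedFDeriv ℝ 4 f x)]
    have h6 := (iteratedFDeriv ℝ 4 f (x + t • y)).le_of_opNorm_le h3 fun _ => y
    rw [Finset.prod_const, Finset.card_univ, Fintype.card_fin] at h6
    rw [norm_smul, norm_pow, Real.norm_of_nonneg (by linarith [ht.2] : (0 : ℝ) ≤ 1 - t)]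
    calc _ ≤ 1 * (B * ‖y‖ ^ 4) := by
          gcongr
          exact pow_le_one₀ (by linarith [ht.2]) (by linarith [ht.1])
      _ = _ := one_mul _
  have h7 : f (x + y) - (f x + fderiv ℝ f x y + 1 / 2 * fderiv ℝ (fderiv ℝ f) x y y
      + 1 / 6 * fderiv ℝ (fderiv ℝ (fderiv ℝ f)) x y y y)
      = 1 / 6 * ∫ t in (0 : ℝ)..1, (1 - t) ^ 3 • iteratedFDeriv ℝ (3 + 1) f (x + t • y) fun _ ↦ y := by
    rw [h]
    simp [Nat.factorial]
  rw [h7, norm_mul, norm_pow, norm_norm]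
  have h8 : 0 ≤ B * ‖y‖ ^ 4 := by positivity
  norm_num at h2 ⊢
  linarith

theorem fderiv_fderiv_comm {G : Type*} [NormedAddCommGroup G] [NormedSpace ℝ G] {f : V → G}
    (hf : ContDiff ℝ 2 f) (x u v : V) :
    fderiv ℝ (fderiv ℝ f) x u v = fderiv ℝ (fderiv ℝ f) x v u :=
  (hf.contDiffAt.isSymmSndFDerivAt (by simp)) u v

theorem fderiv_fderiv_fderiv_comm {f : V → ℝ} (hf : ContDiff ℝ 3 f) (x u v w : V) :
    fderiv ℝ (fderiv ℝ (fderiv ℝ f)) x u v w = fderiv ℝ (fderiv ℝ (fderiv ℝ f)) x u w v := by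
  have h1 : ContDiff ℝ 2 (fderiv ℝ f) := hf.fderiv_right (by norm_num)
  have h2 : ContDiff ℝ 1 (fderiv ℝ (fderiv ℝ f)) := h1.fderiv_right (by norm_num)
  have hd : HasFDerivAt (fderiv ℝ (fderiv ℝ f)) (fderiv ℝ (fderiv ℝ (fderiv ℝ f)) x) x :=
    (h2.differentiable (by norm_num) x).hasFDerivAt
  have e : ∀ a b : V, HasFDerivAt (fun y => fderiv ℝ (fderiv ℝ f) y a b)
      (((fderiv ℝ (fderiv ℝ (fderiv ℝ f)) x).flip a).flip b) x := fun a b => by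
    have h3 := (hd.clm_apply (hasFDerivAt_const a x)).clm_apply (hasFDerivAt_const b x)
    rwa [ContinuousLinearMap.comp_zero, ContinuousLinearMap.comp_zero, zero_add, zero_add] at h3
  have h4 := (e v w).unique ((e w v).congr_of_eventuallyEq (Eventually.of_forall fun y =>
    fderiv_fderiv_comm (hf.of_le (by norm_num)) y v w))
  simpa using DFunLike.congr_fun h4 u

end Taylor

section Complexify

variable {V F : Type*} [NormedAddCommGroup V] [NormedSpace ℂ V] [NormedAddCommGroup F]
  [NormedSpace ℂ F] [NormedSpace ℝ F] [IsScalarTower ℝ ℂ F]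

/-- Twice the complex linear part of a real linear map. -/
def complexify : (V →L[ℝ] F) →L[ℝ] (V →L[ℂ] F) :=
  LinearMap.mkContinuous
    { toFun := fun φ =>
        { toFun := fun ζ => φ ζ - I • φ (I • ζ)
          map_add' := fun x y => by simp only [smul_add, map_add]; abel
          map_smul' := fun c x => by
            have hre : ∀ y : V, φ (c • y) = c.re • φ y + c.im • φ (I • y) := fun y => by
              conv_lhs => rw [← re_add_im c]
              rw [add_smul, mul_smul, ← map_smul φ, ← map_smul φ, ← map_add]
              simp
            rw [smul_comm I c, hre x, hre (I • x), smul_smul I I, I_mul_I, neg_one_smul, map_neg]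
            conv_rhs => rw [RingHom.id_apply, ← re_add_im c]
            have hs : ∀ (t : ℝ) (y : F), t • y = (t : ℂ) • y := fun t y => by
              rw [← algebraMap_smul ℂ t y]; rfl
            simp only [hs]
            match_scalars
            · ring
            · linear_combination (c.im : ℂ) * I_sq
          cont := by fun_prop }
      map_add' := fun φ ψ => by
        ext ζ
        simp only [ContinuousLinearMap.coe_mk', LinearMap.coe_mk, AddHom.coe_mk,
          _root_.add_apply, smul_add]
        abel
      map_smul' := fun c φ => by
        ext ζ
        simp only [ContinuousLinearMap.coe_mk', LinearMap.coe_mk, AddHom.coe_mk,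
          _root_.smul_apply, RingHom.id_apply, smul_sub, smul_comm I c] }
    2 fun φ => by
      refine ContinuousLinearMap.opNorm_le_bound _ (by positivity) fun ζ => ?_
      have h1 := φ.le_opNorm ζ
      have h2 := φ.le_opNorm (I • ζ)
      rw [norm_smul, norm_I, one_mul] at h2
      have h3 := norm_sub_le (φ ζ) (I • φ (I • ζ))
      rw [norm_smul, norm_I, one_mul] at h3
      change ‖φ ζ - I • φ (I • ζ)‖ ≤ _
      linarith

/-- Twice the complex linear part of a real functional. -/
def complexifyForm : (V →L[ℝ] ℝ) →L[ℝ] (V →L[ℂ] ℂ) :=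
  complexify ∘L ContinuousLinearMap.compL ℝ V ℝ ℂ ofRealCLM

theorem complexifyForm_apply (φ : V →L[ℝ] ℝ) (ζ : V) :
    complexifyForm φ ζ = φ ζ - I * φ (I • ζ) := rfl

/-- Four times the complex bilinear part of a real bilinear form. -/
def complexifyBilin : (V →L[ℝ] V →L[ℝ] ℝ) →L[ℝ] (V →L[ℂ] V →L[ℂ] ℂ) :=
  complexify ∘L ContinuousLinearMap.compL ℝ V (V →L[ℝ] ℝ) (V →L[ℂ] ℂ) complexifyForm

theorem complexifyBilin_apply_self {b : V →L[ℝ] V →L[ℝ] ℝ} (hb : ∀ u v, b u v = b v u) (ζ : V) :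
    complexifyBilin b ζ ζ = (b ζ ζ - b (I • ζ) (I • ζ) : ℝ) - 2 * I * b ζ (I • ζ) := by
  change complexifyForm (b ζ) ζ - I * complexifyForm (b (I • ζ)) ζ = _
  rw [complexifyForm_apply, complexifyForm_apply, hb (I • ζ) ζ]
  push_cast
  linear_combination (b (I • ζ) (I • ζ) : ℂ) * I_sq

set_option synthInstance.maxHeartbeats 400000 in
/-- Eight times the complex trilinear part of a real trilinear form. -/
def complexifyTrilin (D : V →L[ℝ] V →L[ℝ] V →L[ℝ] ℝ) : V →L[ℂ] V →L[ℂ] V →L[ℂ] ℂ :=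
  complexify (F := V →L[ℂ] V →L[ℂ] ℂ)
    (ContinuousLinearMap.compL ℝ V (V →L[ℝ] V →L[ℝ] ℝ) (V →L[ℂ] V →L[ℂ] ℂ) complexifyBilin D)

/-- Eight times the part of a real trilinear form that is antilinear in the first variable and
linear in the others, as a function on the diagonal of the latter. -/
def mixedPart (D : V →L[ℝ] V →L[ℝ] V →L[ℝ] ℝ) (w ζ : V) : ℂ :=
  complexifyBilin (D w) ζ ζ + I * complexifyBilin (D (I • w)) ζ ζ

theorem mixedPart_add (D : V →L[ℝ] V →L[ℝ] V →L[ℝ] ℝ) (v w ζ : V) :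
    mixedPart D (v + w) ζ = mixedPart D v ζ + mixedPart D w ζ := by
  simp only [mixedPart, smul_add, map_add, _root_.add_apply]
  ring

theorem mixedPart_smul (D : V →L[ℝ] V →L[ℝ] V →L[ℝ] ℝ) (c : ℂ) (w ζ : V) :
    mixedPart D (c • w) ζ = (starRingEnd ℂ) c * mixedPart D w ζ := by
  have hr : ∀ (t : ℝ) (v : V), mixedPart D ((t : ℂ) • v) ζ = (t : ℂ) * mixedPart D v ζ := by
    intro t v
    have h : ∀ u : V, complexifyBilin (D ((t : ℂ) • u)) ζ ζ
        = (t : ℂ) * complexifyBilin (D u) ζ ζ := fun u => by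
      rw [Complex.coe_smul, ContinuousLinearMap.map_smul, ContinuousLinearMap.map_smul]
      rfl
    rw [mixedPart, mixedPart, smul_comm I (t : ℂ), h, h]
    ring
  have hI : ∀ v : V, mixedPart D (I • v) ζ = -(I * mixedPart D v ζ) := by
    intro v
    simp only [mixedPart, smul_smul, I_mul_I, neg_smul, one_smul, map_neg, _root_.neg_apply]
    linear_combination complexifyBilin (D (I • v)) ζ ζ * I_sq
  conv_lhs => rw [← re_add_im c]
  rw [add_smul, mul_smul, mixedPart_add, hr, hr, hI]
  conv_rhs => rw [← re_add_im c]
  simp only [map_add, map_mul, conj_ofReal, conj_I]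
  ring

set_option synthInstance.maxHeartbeats 400000 in
theorem trilin_apply_self {D : V →L[ℝ] V →L[ℝ] V →L[ℝ] ℝ} (h12 : ∀ u v w, D u v w = D v u w)
    (h23 : ∀ u v w, D u v w = D u w v) (ζ : V) :
    4 * D ζ ζ ζ = (complexifyTrilin D ζ ζ ζ).re + 3 * (mixedPart D ζ ζ).re := by
  have e : complexifyTrilin D ζ ζ ζ
      = complexifyBilin (D ζ) ζ ζ - I * complexifyBilin (D (I • ζ)) ζ ζ := rfl
  rw [e, mixedPart, complexifyBilin_apply_self (h23 ζ), complexifyBilin_apply_self (h23 (I • ζ))]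
  simp
  rw [h12 (I • ζ) ζ]
  ring

end Complexify

section HermitianCoordinates

theorem InnerProductSpace.Core.exists_linearEquiv {V : Type*} [AddCommGroup V] [Module ℂ V]
    [FiniteDimensional ℂ V] (c : InnerProductSpace.Core ℂ V) :
    ∃ M : V ≃ₗ[ℂ] EuclideanSpace ℂ (Fin (Module.finrank ℂ V)),
      ∀ v, ‖M v‖ ^ 2 = (c.inner v v).re := by
  let _ : NormedAddCommGroup V := c.toNormedAddCommGroup
  let _ : InnerProductSpace ℂ V := InnerProductSpace.ofCore c.toCore
  refine ⟨(stdOrthonormalBasis ℂ V).repr.toLinearEquiv, fun v => ?_⟩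
  have h1 : ‖(stdOrthonormalBasis ℂ V).repr.toLinearEquiv v‖ = ‖v‖ :=
    (stdOrthonormalBasis ℂ V).repr.norm_map v
  rw [h1]
  exact norm_sq_eq_re_inner (𝕜 := ℂ) v

variable {V : Type*} [NormedAddCommGroup V] [NormedSpace ℂ V]

/-- The Hermitian part of a real bilinear form, plus a multiple of a rank one form. -/
def hermitianPart (b : V →L[ℝ] V →L[ℝ] ℝ) (l : V →L[ℂ] ℂ) (K : ℝ) (u v : V) : ℂ :=
  1 / 4 * ((b u v + b (I • u) (I • v) : ℝ) + I * (b (I • u) v - b u (I • v) : ℝ))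
    + K * ((starRingEnd ℂ) (l u) * l v)

theorem hermitianPart_add (b : V →L[ℝ] V →L[ℝ] ℝ) (l : V →L[ℂ] ℂ) (K : ℝ) (u v w : V) :
    hermitianPart b l K (u + v) w = hermitianPart b l K u w + hermitianPart b l K v w := by
  simp only [hermitianPart, smul_add, map_add, _root_.add_apply]
  push_cast
  ring

theorem hermitianPart_smul (b : V →L[ℝ] V →L[ℝ] ℝ) (l : V →L[ℂ] ℂ) (K : ℝ) (c : ℂ) (u v : V) :
    hermitianPart b l K (c • u) v = (starRingEnd ℂ) c * hermitianPart b l K u v := by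
  have hr : ∀ (t : ℝ) (u : V),
      hermitianPart b l K ((t : ℂ) • u) v = (t : ℂ) * hermitianPart b l K u v := by
    intro t u
    have h : ∀ x y : V, b ((t : ℂ) • x) y = t * b x y := fun x y => by
      rw [Complex.coe_smul, ContinuousLinearMap.map_smul]
      rfl
    simp only [hermitianPart, smul_comm I (t : ℂ), h, ContinuousLinearMap.map_smul l, smul_eq_mul,
      map_mul, conj_ofReal]
    push_cast
    ring
  have hI : ∀ u : V, hermitianPart b l K (I • u) v = -(I * hermitianPart b l K u v) := by
    intro u
    have h : ∀ y : V, b (I • I • u) y = -b u y := fun y => by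
      rw [smul_smul, I_mul_I, neg_one_smul, map_neg]
      rfl
    simp only [hermitianPart, h, ContinuousLinearMap.map_smul l, smul_eq_mul, map_mul, conj_I]
    push_cast
    linear_combination (1 / 4 * (b (I • u) v - b u (I • v)) : ℂ) * I_sq
  conv_lhs => rw [← re_add_im c]
  rw [add_smul, mul_smul, hermitianPart_add, hr, hr, hI]
  conv_rhs => rw [← re_add_im c]
  simp only [map_add, map_mul, conj_ofReal, conj_I]
  ring

theorem hermitianPart_conj_symm {b : V →L[ℝ] V →L[ℝ] ℝ} (hb : ∀ u v, b u v = b v u)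
    (l : V →L[ℂ] ℂ) (K : ℝ) (u v : V) :
    (starRingEnd ℂ) (hermitianPart b l K v u) = hermitianPart b l K u v := by
  simp only [hermitianPart, map_add, map_mul, conj_ofReal, conj_I, conj_conj, map_div₀, map_one,
    map_ofNat, hb v u, hb (I • v) (I • u), hb (I • v) u, hb v (I • u)]
  push_cast
  ring

theorem hermitianPart_self {b : V →L[ℝ] V →L[ℝ] ℝ} (hb : ∀ u v, b u v = b v u)
    (l : V →L[ℂ] ℂ) (K : ℝ) (u : V) :
    hermitianPart b l K u u
      = ((b u u + b (I • u) (I • u)) / 4 + K * ‖l u‖ ^ 2 : ℝ) := by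
  rw [hermitianPart, hb (I • u) u, conj_mul', sub_self]
  push_cast
  ring

theorem exists_pos_add_mul_norm_sq [FiniteDimensional ℂ V] (b : V →L[ℝ] V →L[ℝ] ℝ)
    (l : V →L[ℂ] ℂ)
    (hpos : ∀ ζ, ζ ≠ 0 → l ζ = 0 → 0 < (b ζ ζ + b (I • ζ) (I • ζ)) / 4) :
    ∃ K : ℝ, ∀ ζ, ζ ≠ 0 → 0 < (b ζ ζ + b (I • ζ) (I • ζ)) / 4 + K * ‖l ζ‖ ^ 2 := by
  have : ProperSpace V := FiniteDimensional.proper ℂ V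
  obtain ⟨K, hK⟩ := (isCompact_sphere (0 : V) 1).elim_directed_cover
    (fun K : ℕ => {ζ : V | 0 < (b ζ ζ + b (I • ζ) (I • ζ)) / 4 + K * ‖l ζ‖ ^ 2})
    (fun K => isOpen_lt (by fun_prop) (by fun_prop)) (fun ζ hζ => by
      have hζ0 : ζ ≠ 0 := fun h => by simp [h] at hζ
      rw [mem_iUnion]
      by_cases h : l ζ = 0
      · exact ⟨0, by simpa using hpos ζ hζ0 h⟩
      · have hl : 0 < ‖l ζ‖ ^ 2 := by positivity
        obtain ⟨K, hK⟩ := exists_nat_gt (-((b ζ ζ + b (I • ζ) (I • ζ)) / 4) / ‖l ζ‖ ^ 2)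
        refine ⟨K, ?_⟩
        rw [div_lt_iff₀ hl] at hK
        rw [mem_ofPred_eq]
        linarith)
    (directed_of_isDirected_le fun i j hij ζ hζ => by
      rw [mem_ofPred_eq] at hζ ⊢
      have : (i : ℝ) * ‖l ζ‖ ^ 2 ≤ j * ‖l ζ‖ ^ 2 := by gcongr
      linarith)
  refine ⟨K, fun ζ hζ => ?_⟩
  have hn : 0 < ‖ζ‖ := norm_pos_iff.2 hζ
  have h := hK (show ((‖ζ‖⁻¹ : ℝ) : ℂ) • ζ ∈ sphere (0 : V) 1 by
    rw [mem_sphere_zero_iff_norm, norm_smul, norm_real, norm_inv, norm_norm,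
      inv_mul_cancel₀ hn.ne'])
  have hb : ∀ x y : V, b (((‖ζ‖⁻¹ : ℝ) : ℂ) • x) (((‖ζ‖⁻¹ : ℝ) : ℂ) • y)
      = ‖ζ‖⁻¹ ^ 2 * b x y := fun x y => by
    rw [Complex.coe_smul, Complex.coe_smul, ContinuousLinearMap.map_smul,
      ContinuousLinearMap.map_smul, _root_.smul_apply, smul_eq_mul, smul_eq_mul]
    ring
  rw [mem_ofPred_eq, smul_comm I, hb, hb, ContinuousLinearMap.map_smul l, norm_smul, norm_real,
    norm_inv, norm_norm] at h
  have h2 : 0 < ‖ζ‖⁻¹ ^ 2 * ((b ζ ζ + b (I • ζ) (I • ζ)) / 4 + K * ‖l ζ‖ ^ 2) := by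
    linarith
  exact (pos_iff_pos_of_mul_pos h2).1 (by positivity)

theorem exists_hermitian_coordinates [FiniteDimensional ℂ V] {b : V →L[ℝ] V →L[ℝ] ℝ}
    (hb : ∀ u v, b u v = b v u) (l : V →L[ℂ] ℂ)
    (hpos : ∀ ζ, ζ ≠ 0 → l ζ = 0 → 0 < (b ζ ζ + b (I • ζ) (I • ζ)) / 4) :
    ∃ (K : ℝ) (M : V ≃L[ℂ] EuclideanSpace ℂ (Fin (Module.finrank ℂ V))),
      ∀ ζ, ‖M ζ‖ ^ 2 = (b ζ ζ + b (I • ζ) (I • ζ)) / 4 + K * ‖l ζ‖ ^ 2 := by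
  obtain ⟨K, hK⟩ := exists_pos_add_mul_norm_sq b l hpos
  let c : InnerProductSpace.Core ℂ V :=
    { inner := hermitianPart b l K
      conj_inner_symm := hermitianPart_conj_symm hb l K
      re_inner_nonneg := fun u => by
        rw [hermitianPart_self hb]
        by_cases hu : u = 0
        · simp [hu]
        · exact (hK u hu).le
      add_left := hermitianPart_add b l K
      smul_left := fun u v r => hermitianPart_smul b l K r u v
      definite := fun u hu => by
        by_contra h
        rw [hermitianPart_self hb, ofReal_eq_zero] at hu
        exact (hK u h).ne' hu }
  obtain ⟨M, hM⟩ := c.exists_linearEquiv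
  refine ⟨K, M.toContinuousLinearEquiv, fun ζ => ?_⟩
  have h : c.inner ζ ζ = hermitianPart b l K ζ ζ := rfl
  rw [LinearEquiv.coe_toContinuousLinearEquiv', hM, h, hermitianPart_self hb, ofReal_re]

end HermitianCoordinates

section NormalForm

open Asymptotics

variable {V W : Type*} [NormedAddCommGroup V] [NormedSpace ℂ V] [NormedAddCommGroup W]
  [InnerProductSpace ℂ W]

theorem mixedPart_sum {ι : Type*} (D : V →L[ℝ] V →L[ℝ] V →L[ℝ] ℝ) (s : Finset ι) (v : ι → V)
    (ζ : V) : mixedPart D (∑ i ∈ s, v i) ζ = ∑ i ∈ s, mixedPart D (v i) ζ := by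
  classical
  induction s using Finset.induction_on with
  | empty => simpa using mixedPart_smul D 0 (0 : V) ζ
  | insert i s hi ih => rw [Finset.sum_insert hi, Finset.sum_insert hi, mixedPart_add, ih]

theorem isBigO_bilin_apply_self {G : Type*} [NormedAddCommGroup G] [NormedSpace ℂ G]
    (B : V →L[ℂ] V →L[ℂ] G) : (fun ζ => B ζ ζ) =O[𝓝 0] fun ζ => ‖ζ‖ ^ 2 :=
  IsBigO.of_bound ‖B‖ (Eventually.of_forall fun ζ => by
    rw [norm_pow, norm_norm, sq, ← mul_assoc]
    exact B.le_opNorm₂ ζ ζ)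

theorem contDiff_bilin_apply_self {G : Type*} [NormedAddCommGroup G] [NormedSpace ℂ G]
    (B : V →L[ℂ] V →L[ℂ] G) : ContDiff ℂ ⊤ fun ζ => B ζ ζ :=
  B.contDiff.clm_apply contDiff_id

/-- The antilinear part of a trilinear form is represented by a quadratic map. -/
theorem exists_inner_eq_mixedPart [FiniteDimensional ℂ W] (D : V →L[ℝ] V →L[ℝ] V →L[ℝ] ℝ)
    (M : V ≃L[ℂ] W) :
    ∃ σ : V → W, ContDiff ℂ ⊤ σ ∧ (σ =O[𝓝 0] fun ζ => ‖ζ‖ ^ 2) ∧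
      ∀ w ζ, inner ℂ w (σ ζ) = 1 / 16 * mixedPart D (M.symm w) ζ := by
  let e := stdOrthonormalBasis ℂ W
  let B : Fin (Module.finrank ℂ W) → V →L[ℂ] V →L[ℂ] ℂ := fun k =>
    complexifyBilin (D (M.symm (e k))) + I • complexifyBilin (D (I • M.symm (e k)))
  have hB : ∀ k ζ, B k ζ ζ = mixedPart D (M.symm (e k)) ζ := fun k ζ => rfl
  refine ⟨fun ζ => ∑ k, (1 / 16 * B k ζ ζ) • e k, ?_, ?_, fun w ζ => ?_⟩
  · exact ContDiff.sum fun k _ =>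
      (contDiff_const.mul (contDiff_bilin_apply_self (B k))).smul contDiff_const
  · refine IsBigO.fun_sum fun k _ => isBigO_norm_left.1 ?_
    simp only [norm_smul, e.norm_eq_one, mul_one]
    exact ((isBigO_bilin_apply_self (B k)).const_mul_left (1 / 16)).norm_left
  · conv_rhs => rw [← e.sum_repr' w, map_sum, mixedPart_sum]
    simp only [inner_sum, inner_smul_right, hB, map_smul, mixedPart_smul, inner_conj_symm]
    rw [Finset.mul_sum]
    exact Finset.sum_congr rfl fun k _ => by ring

theorem norm_sq_orthogonalProjection_span_singleton_orthogonal [CompleteSpace W] {e : W}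
    (he : e ≠ 0) (x : W) :
    ‖(ℂ ∙ e)ᗮ.orthogonalProjectionOnto x‖ ^ 2 = ‖x‖ ^ 2 - ‖inner ℂ e x‖ ^ 2 / ‖e‖ ^ 2 := by
  have h := (ℂ ∙ e).norm_sq_eq_add_norm_sq_projection x
  have h2 : ‖(ℂ ∙ e).orthogonalProjectionOnto x‖ = ‖inner ℂ e x‖ / ‖e‖ := by
    rw [← Submodule.norm_coe, Submodule.coe_orthogonalProjectionOnto_apply,
      Submodule.starProjection_singleton, norm_smul, norm_div]
    simp only [coe_algebraMap, norm_real, norm_pow, norm_norm]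
    have : ‖e‖ ≠ 0 := norm_ne_zero_iff.2 he
    field_simp
  rw [h2, div_pow] at h
  linarith

theorem exists_continuousLinearEquiv_orthogonal_prod [FiniteDimensional ℂ V]
    [FiniteDimensional ℂ W] (M : V ≃L[ℂ] W) {e : W} (he : e ≠ 0) (l : V →L[ℂ] ℂ)
    (hl : ∀ ζ, inner ℂ e (M ζ) = l ζ) :
    ∃ A : V ≃L[ℂ] (ℂ ∙ e)ᗮ × ℂ,
      (A : V →L[ℂ] (ℂ ∙ e)ᗮ × ℂ) = ((ℂ ∙ e)ᗮ.orthogonalProjectionOnto ∘L M).prod l := by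
  have hinj : (((ℂ ∙ e)ᗮ.orthogonalProjectionOnto ∘L
      (M : V →L[ℂ] W)).prod l : V →L[ℂ] (ℂ ∙ e)ᗮ × ℂ).ker = ⊥ := by
    refine (Submodule.eq_bot_iff _).2 fun ζ hζ => ?_
    obtain ⟨h1, h2⟩ := Prod.mk.inj (show ((ℂ ∙ e)ᗮ.orthogonalProjectionOnto (M ζ), l ζ) = 0 from hζ)
    have h := norm_sq_orthogonalProjection_span_singleton_orthogonal he (M ζ)
    rw [h1, hl, h2] at h
    have h0 : ‖M ζ‖ ^ 2 = 0 := by simpa using h.symm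
    simpa using h0
  have hsurj : (((ℂ ∙ e)ᗮ.orthogonalProjectionOnto ∘L
      (M : V →L[ℂ] W)).prod l : V →L[ℂ] (ℂ ∙ e)ᗮ × ℂ).range = ⊤ := by
    refine LinearMap.range_eq_top.2 fun y => ⟨M.symm (y.1 + (y.2 / ‖e‖ ^ 2) • e), ?_⟩
    have hn : (‖e‖ : ℂ) ≠ 0 := by simpa using he
    have hy : inner ℂ e (y.1 : W) = 0 := Submodule.mem_orthogonal_singleton_iff_inner_right.1 y.1.2
    have h0 : (ℂ ∙ e)ᗮ.orthogonalProjectionOnto e = 0 :=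
      Submodule.orthogonalProjectionOnto_orthogonal_apply_eq_zero
        (Submodule.mem_span_singleton_self e)
    refine Prod.ext ?_ ?_
    · change (ℂ ∙ e)ᗮ.orthogonalProjectionOnto (M (M.symm _)) = y.1
      rw [M.apply_symm_apply, map_add, map_smul, h0, smul_zero, add_zero,
        Submodule.orthogonalProjectionOnto_mem_subspace_eq_self]
    · change l (M.symm _) = y.2
      rw [← hl, M.apply_symm_apply, inner_add_right, hy, inner_smul_right, inner_self_eq_norm_sq_to_K]
      simp [hn]
  exact ⟨ContinuousLinearEquiv.ofBijective _ hinj hsurj, ContinuousLinearEquiv.coe_ofBijective _ _ _⟩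

end NormalForm

section ExistsNormalForm

open Asymptotics

theorem isBigO_norm_sq_of_isBigO_sq {U G : Type*} [NormedAddCommGroup U]
    [NormedAddCommGroup G] {g : U → ℝ} {σ : U → G} (hσ : σ =O[𝓝 0] fun ζ => ‖ζ‖ ^ 2) (hg : (fun ζ : U => ‖ζ‖ ^ 4) =O[𝓝 0] g) :
    (fun ζ => ‖σ ζ‖ ^ 2) =O[𝓝 0] g := by
  refine (hσ.norm_left.pow 2).trans (IsBigO.trans (IsBigO.of_bound 1 ?_) hg)
  exact Eventually.of_forall fun ζ => by rw [← pow_mul, one_mul]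

variable {V : Type*} [NormedAddCommGroup V] [NormedSpace ℂ V]

/-- Near a strongly pseudoconvex boundary point, a defining function agrees to fourth order with
that of the Siegel half-space after a holomorphic change of coordinates. -/
theorem exists_siegel_coordinates [FiniteDimensional ℂ V] {f : V → ℝ} (hf : ContDiff ℝ 4 f)
    (hf0 : f 0 = 0) (hdf : fderiv ℝ f 0 ≠ 0)
    (hpos : ∀ ζ, ζ ≠ 0 → fderiv ℝ f 0 ζ = 0 → fderiv ℝ f 0 (I • ζ) = 0 →
      0 < (fderiv ℝ (fderiv ℝ f) 0 ζ ζ + fderiv ℝ (fderiv ℝ f) 0 (I • ζ) (I • ζ)) / 4) :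
    ∃ (E : Submodule ℂ (EuclideanSpace ℂ (Fin (Module.finrank ℂ V)))) (Θ : V → E × ℂ)
      (A : V ≃L[ℂ] E × ℂ), ContDiff ℂ ⊤ Θ ∧ Θ 0 = 0 ∧ HasFDerivAt Θ (A : V →L[ℂ] E × ℂ) 0 ∧
      (fun ζ => f ζ + (Θ ζ).2.re - ‖(Θ ζ).1‖ ^ 2) =O[𝓝 0] fun ζ => ‖(Θ ζ).2‖ ^ 2 + ‖ζ‖ ^ 4 := by
  set b := fderiv ℝ (fderiv ℝ f) 0 with hb_def
  set D := fderiv ℝ (fderiv ℝ (fderiv ℝ f)) 0 with hD_def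
  have hb : ∀ u v, b u v = b v u := fderiv_fderiv_comm (hf.of_le (by norm_num)) 0
  have hf1 : ContDiff ℝ 3 (fderiv ℝ f) := hf.fderiv_right (by norm_num)
  have h12 : ∀ u v w, D u v w = D v u w := fun u v w => by
    rw [hD_def, fderiv_fderiv_comm (hf1.of_le (by norm_num)) 0 u v]
  have h23 : ∀ u v w, D u v w = D u w v :=
    fderiv_fderiv_fderiv_comm (hf.of_le (by norm_num)) 0
  let l : V →L[ℂ] ℂ := -complexifyForm (fderiv ℝ f 0)
  have hl : ∀ ζ, l ζ = -(fderiv ℝ f 0 ζ - I * fderiv ℝ f 0 (I • ζ)) := fun ζ => rfl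
  have hlre : ∀ ζ, (l ζ).re = -fderiv ℝ f 0 ζ := fun ζ => by rw [hl]; simp
  have hlim : ∀ ζ, (l ζ).im = fderiv ℝ f 0 (I • ζ) := fun ζ => by rw [hl]; simp
  obtain ⟨K, M, hM⟩ := exists_hermitian_coordinates hb l fun ζ hζ h => hpos ζ hζ
    (by rw [← neg_eq_zero, ← hlre, h, zero_re]) (by rw [← hlim, h, zero_im])
  obtain ⟨σ, hσ, hσO, hσi⟩ := exists_inner_eq_mixedPart D M
  let e := (InnerProductSpace.toDual ℂ (EuclideanSpace ℂ (Fin (Module.finrank ℂ V)))).symm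
    (l ∘L (M.symm : EuclideanSpace ℂ (Fin (Module.finrank ℂ V)) →L[ℂ] V))
  have hel : ∀ ζ, inner ℂ e (M ζ) = l ζ := fun ζ => by
    rw [InnerProductSpace.toDual_symm_apply]
    simp
  have he : e ≠ 0 := fun h => hdf <| ContinuousLinearMap.ext fun ζ => by
    have h1 := hel ζ
    rw [h, inner_zero_left] at h1
    rw [← neg_neg (fderiv ℝ f 0 ζ), ← hlre, ← h1]
    simp
  obtain ⟨A, hA⟩ := exists_continuousLinearEquiv_orthogonal_prod M he l hel
  let B := complexifyBilin b
  let T := complexifyTrilin D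
  let τ : V → ℂ := fun ζ => 1 / 4 * B ζ ζ + 1 / 24 * T ζ ζ ζ
  have hτ : ContDiff ℂ ⊤ τ := by
    refine (contDiff_const.mul (contDiff_bilin_apply_self B)).add (contDiff_const.mul ?_)
    exact (contDiff_bilin_apply_self T).clm_apply contDiff_id
  have hτO : τ =O[𝓝 0] fun ζ => ‖ζ‖ ^ 2 := by
    refine ((isBigO_bilin_apply_self B).const_mul_left _).add (IsBigO.const_mul_left ?_ _)
    refine IsBigO.trans (IsBigO.of_bound 1 ?_) (isBigO_bilin_apply_self T)
    filter_upwards [closedBall_mem_nhds (0 : V) one_pos] with ζ hζ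
    rw [mem_closedBall_zero_iff] at hζ
    rw [one_mul]
    exact ((T ζ ζ).le_opNorm ζ).trans (mul_le_of_le_one_right (norm_nonneg _) hζ)
  let P := (ℂ ∙ e)ᗮ.orthogonalProjectionOnto
  let Θ : V → (ℂ ∙ e)ᗮ × ℂ := fun ζ => (P (M ζ + σ ζ), l ζ - τ ζ)
  have hσ0 : HasFDerivAt σ (0 : V →L[ℂ] _) 0 :=
    IsBigO.hasFDerivAt (n := 2) (by simpa using hσO) one_lt_two
  have hτ0 : HasFDerivAt τ (0 : V →L[ℂ] ℂ) 0 :=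
    IsBigO.hasFDerivAt (n := 2) (by simpa using hτO) one_lt_two
  have hσz : σ 0 = 0 :=
    IsBigO.eq_zero_of_norm_pow (x₀ := 0) (by simpa using hσO) two_ne_zero
  refine ⟨(ℂ ∙ e)ᗮ, Θ, A, ?_, ?_, ?_, ?_⟩
  · exact (P.contDiff.comp (M.contDiff.add hσ)).prodMk (l.contDiff.sub hτ)
  · refine Prod.ext ?_ ?_
    · simp [Θ, hσz]
    · simp [Θ, τ]
  · rw [hA]
    have h1 := P.hasFDerivAt.comp (0 : V) (M.hasFDerivAt.add hσ0)
    have h2 := l.hasFDerivAt.sub hτ0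
    rw [add_zero] at h1
    rw [sub_zero] at h2
    exact h1.prodMk h2
  · set g : V → ℝ := fun ζ => ‖(Θ ζ).2‖ ^ 2 + ‖ζ‖ ^ 4 with hg
    have hg4 : (fun ζ : V => ‖ζ‖ ^ 4) =O[𝓝 0] g := IsBigO.of_bound 1 <|
      Eventually.of_forall fun ζ => by
        rw [one_mul, Real.norm_of_nonneg (by positivity), Real.norm_of_nonneg (by positivity)]
        simp only [hg]
        linarith [sq_nonneg ‖(Θ ζ).2‖]
    have hσ2 := isBigO_norm_sq_of_isBigO_sq hσO hg4
    have hτ2 := isBigO_norm_sq_of_isBigO_sq hτO hg4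
    have hl2 : (fun ζ => ‖l ζ‖ ^ 2) =O[𝓝 0] g := by
      refine IsBigO.trans (IsBigO.of_bound 2 (Eventually.of_forall fun ζ => ?_))
        ((isBigO_refl g _).add hτ2)
      rw [Real.norm_of_nonneg (by positivity), Real.norm_of_nonneg (by positivity)]
      have h1 : ‖l ζ‖ ≤ ‖(Θ ζ).2‖ + ‖τ ζ‖ := by
        simpa [Θ] using norm_add_le (l ζ - τ ζ) (τ ζ)
      have h2 : ‖l ζ‖ ^ 2 ≤ (‖(Θ ζ).2‖ + ‖τ ζ‖) ^ 2 := by gcongr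
      have h3 : 0 ≤ ‖ζ‖ ^ 4 := by positivity
      simp only [hg]
      nlinarith [sq_nonneg (‖(Θ ζ).2‖ - ‖τ ζ‖)]
    have hx2 : (fun ζ => ‖inner ℂ e (M ζ + σ ζ)‖ ^ 2) =O[𝓝 0] g := by
      refine IsBigO.trans (IsBigO.of_bound 2 (Eventually.of_forall fun ζ => ?_))
        (hl2.add (hσ2.const_mul_left (‖e‖ ^ 2)))
      rw [Real.norm_of_nonneg (by positivity), Real.norm_of_nonneg (by positivity)]
      have h1 : ‖inner ℂ e (M ζ + σ ζ)‖ ≤ ‖l ζ‖ + ‖e‖ * ‖σ ζ‖ := by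
        rw [inner_add_right, hel]
        exact (norm_add_le _ _).trans (by gcongr; exact norm_inner_le_norm _ _)
      have h2 : ‖inner ℂ e (M ζ + σ ζ)‖ ^ 2 ≤ (‖l ζ‖ + ‖e‖ * ‖σ ζ‖) ^ 2 := by gcongr
      nlinarith [sq_nonneg (‖l ζ‖ - ‖e‖ * ‖σ ζ‖)]
    have hR := (taylor_three_isBigO hf 0).trans hg4
    refine ((((hR.sub (hl2.const_mul_left K)).sub hσ2).add
      (hx2.const_mul_left (‖e‖ ^ 2)⁻¹))).congr_left fun ζ => ?_
    have e1 : ‖(Θ ζ).1‖ ^ 2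
        = ‖M ζ + σ ζ‖ ^ 2 - ‖inner ℂ e (M ζ + σ ζ)‖ ^ 2 / ‖e‖ ^ 2 :=
      norm_sq_orthogonalProjection_span_singleton_orthogonal he _
    have e2 : ‖M ζ + σ ζ‖ ^ 2 = ‖M ζ‖ ^ 2 + (mixedPart D ζ ζ).re / 8 + ‖σ ζ‖ ^ 2 := by
      rw [norm_add_sq (𝕜 := ℂ), hσi, M.symm_apply_apply]
      simp
      ring
    have e3 : (Θ ζ).2.re
        = -fderiv ℝ f 0 ζ - (B ζ ζ).re / 4 - (T ζ ζ ζ).re / 24 := by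
      change (l ζ - (1 / 4 * B ζ ζ + 1 / 24 * T ζ ζ ζ)).re = _
      rw [sub_re, hlre]
      simp
      ring
    have e4 : (B ζ ζ).re = b ζ ζ - b (I • ζ) (I • ζ) := by
      change (complexifyBilin b ζ ζ).re = _
      rw [complexifyBilin_apply_self hb]
      simp
    have e5 : 4 * D ζ ζ ζ = (T ζ ζ ζ).re + 3 * (mixedPart D ζ ζ).re :=
      trilin_apply_self h12 h23 ζ
    rw [e1, e2, e3, e4, hM, zero_add, hf0, div_eq_inv_mul _ (‖e‖ ^ 2), ← hb_def, ← hD_def]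
    linarith

end ExistsNormalForm

section ExistsSiegelNormalForm

variable {V : Type*} [NormedAddCommGroup V] [InnerProductSpace ℂ V]

theorem exists_siegelNormalForm [FiniteDimensional ℂ V] {Ω : Set V} {p : V} {ρ : V → ℝ}
    (hρ : ContDiff ℝ 4 ρ) (hΩ : Ω = {z | ρ z < 0}) (hp : ρ p = 0) (hdρ : fderiv ℝ ρ p ≠ 0)
    (hpos : ∀ ζ, ζ ≠ 0 → fderiv ℝ ρ p ζ = 0 → fderiv ℝ ρ p (I • ζ) = 0 →
      0 < (fderiv ℝ (fderiv ℝ ρ) p ζ ζ + fderiv ℝ (fderiv ℝ ρ) p (I • ζ) (I • ζ)) / 4) :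
    ∃ E : Submodule ℂ (EuclideanSpace ℂ (Fin (Module.finrank ℂ V))),
      Nonempty (SiegelNormalForm Ω p E) := by
  have h1 : fderiv ℝ (fun ζ => ρ (p + ζ)) = fun ζ => fderiv ℝ ρ (p + ζ) := by
    ext1 ζ
    exact fderiv_comp_add_left p
  have h2 : fderiv ℝ (fderiv ℝ fun ζ => ρ (p + ζ)) 0 = fderiv ℝ (fderiv ℝ ρ) p := by
    rw [h1, fderiv_comp_add_left, add_zero]
  have h1' : fderiv ℝ (fun ζ => ρ (p + ζ)) 0 = fderiv ℝ ρ p := by rw [h1]; simp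
  obtain ⟨E, Θ, A, hΘ, hΘ0, hA, hO⟩ := exists_siegel_coordinates (f := fun ζ => ρ (p + ζ))
    (hρ.comp (contDiff_const.add contDiff_id)) (by simpa using hp) (by rwa [h1'])
    (by rwa [h1', h2])
  refine ⟨E, ?_⟩
  obtain ⟨C₀, hC₀, hC⟩ := hO.exists_pos
  have hs : HasStrictFDerivAt Θ (A : V →L[ℂ] E × ℂ) 0 :=
    hΘ.contDiffAt.hasStrictFDerivAt' hA (by simp)
  obtain ⟨K, hK, hKb⟩ := (hA.isTheta_sub A.toHomeomorph.isInducing).isBigO_symm.exists_pos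
  obtain ⟨L, s, hs0, hL⟩ := hs.exists_lipschitzOnWith
  let C := C₀ * (1 + K ^ 4)
  have hCpos : 0 < C := by positivity
  have hsmall : ∀ᶠ x in 𝓝 (0 : V), (2 * C + 1) * ‖Θ x‖ < 1 := by
    have : ContinuousAt (fun x => (2 * C + 1) * ‖Θ x‖) 0 :=
      (continuous_const.mul hΘ.continuous.norm).continuousAt
    exact this.eventually_lt continuousAt_const (by simp [hΘ0])
  let φ := hs.toOpenPartialHomeomorph Θ
  have hφ : (0 : V) ∈ φ.source := hs.mem_toOpenPartialHomeomorph_source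
  have hφt : (0 : E × ℂ) ∈ φ.target := by
    rw [← hΘ0]
    exact hs.image_mem_toOpenPartialHomeomorph_target
  have hφ0 : φ.symm 0 = 0 := by
    rw [← hΘ0]
    exact φ.left_inv hφ
  obtain ⟨r, hr, hball⟩ := Metric.mem_nhds_iff.1 (inter_mem (inter_mem hs0
    (φ.open_source.mem_nhds hφ)) (hsmall.and (hC.bound.and hKb.bound)))
  have hsymm : ContDiffAt ℂ 1 φ.symm 0 := by
    refine φ.contDiffAt_symm (f₀' := A) hφt ?_ ?_
    · rw [hφ0]; exact hA
    · exact hΘ.contDiffAt.of_le le_top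
  obtain ⟨κ, hκ, hballκ⟩ := Metric.mem_nhds_iff.1 (inter_mem (φ.open_target.mem_nhds hφt)
    ((hsymm.eventually (by simp)).and (hsymm.continuousAt.eventually_mem
      (by rw [hφ0]; exact ball_mem_nhds 0 hr))))
  have hest : ∀ x ∈ ball (0 : V) r, |ρ (p + x) + (Θ x).2.re - ‖(Θ x).1‖ ^ 2|
      ≤ C * (‖(Θ x).2‖ ^ 2 + ‖(Θ x).1‖ ^ 4) := by
    intro x hx
    obtain ⟨-, h3, h4, h5⟩ := hball hx
    rw [Real.norm_eq_abs, Real.norm_of_nonneg (by positivity)] at h4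
    rw [hΘ0, sub_zero, sub_zero] at h5
    have h6 : ‖Θ x‖ ≤ 1 := by nlinarith [norm_nonneg (Θ x), mul_nonneg hCpos.le (norm_nonneg (Θ x))]
    have h7 : ‖x‖ ^ 4 ≤ K ^ 4 * ‖Θ x‖ ^ 4 := by
      rw [← mul_pow]
      gcongr
    have h8 : ‖Θ x‖ ^ 4 ≤ ‖(Θ x).2‖ ^ 2 + ‖(Θ x).1‖ ^ 4 := by
      rcases max_choice ‖(Θ x).1‖ ‖(Θ x).2‖ with h | h <;> rw [← Prod.norm_def] at h
      · rw [h]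
        linarith [sq_nonneg ‖(Θ x).2‖]
      · have h9 := pow_le_pow_of_le_one (norm_nonneg _) h6 (show 2 ≤ 4 by norm_num)
        rw [h] at h9 ⊢
        have : 0 ≤ ‖(Θ x).1‖ ^ 4 := by positivity
        linarith
    have h9 : K ^ 4 * ‖Θ x‖ ^ 4 ≤ K ^ 4 * (‖(Θ x).2‖ ^ 2 + ‖(Θ x).1‖ ^ 4) := by gcongr
    have h10 : 0 ≤ ‖(Θ x).1‖ ^ 4 := by positivity
    calc _ ≤ _ := h4
      _ ≤ C₀ * ((1 + K ^ 4) * (‖(Θ x).2‖ ^ 2 + ‖(Θ x).1‖ ^ 4)) := by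
        gcongr
        linarith
      _ = _ := by ring
  exact ⟨{
    toFun := Θ
    inv := φ.symm
    r := r
    κ := κ
    C := C
    K := K
    L := L
    r_pos := hr
    κ_pos := hκ
    C_nonneg := hCpos.le
    K_pos := hK
    L_nonneg := L.2
    differentiableOn := (hΘ.differentiable (by simp)).differentiableOn
    injOn := φ.injOn.mono fun x hx => (hball hx).1.2
    lipschitz := fun x hx y hy => by
      simpa [dist_eq_norm] using hL.dist_le_mul x (hball hx).1.1 y (hball hy).1.1
    norm_le := fun x hx => by simpa [hΘ0] using (hball hx).2.2.2
    differentiableOn_inv := fun w hw =>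
      ((hballκ hw).2.1.differentiableAt one_ne_zero).differentiableWithinAt
    inv_mem := fun w hw => (hballκ hw).2.2
    right_inv := fun w hw => φ.right_inv (hballκ hw).1
    small := fun x hx => (hball hx).2.1.le
    notMem := by simp [hΩ, hp]
    le_of_mem := fun x hx hxΩ => by
      rw [hΩ, mem_ofPred_eq] at hxΩ
      linarith [(abs_le.1 (hest x hx)).1]
    mem_of_lt := fun x hx hlt => by
      rw [hΩ, mem_ofPred_eq]
      linarith [(abs_le.1 (hest x hx)).2] }⟩

end ExistsSiegelNormalForm

section IdentityPrinciple

variable {V G : Type*} [NormedAddCommGroup V] [NormedSpace ℂ V] [NormedAddCommGroup G]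
  [NormedSpace ℂ G] [CompleteSpace G]

theorem eqOn_ball_of_eventuallyEq {f g : V → G} {x u : V} {r : ℝ}
    (hf : DifferentiableOn ℂ f (ball x r)) (hg : DifferentiableOn ℂ g (ball x r))
    (hu : u ∈ ball x r) (hfg : f =ᶠ[𝓝 u] g) : EqOn f g (ball x r) := by
  intro y hy
  let c : ℂ → V := fun t => u + t • (y - u)
  have hc : Differentiable ℂ c := by fun_prop
  have hS : IsOpen (c ⁻¹' ball x r) := isOpen_ball.preimage hc.continuous
  have hconv : IsPreconnected (c ⁻¹' ball x r) :=
    (((convex_ball x r).translate_preimage_right u).linear_preimage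
      ((LinearMap.toSpanSingleton ℂ V (y - u)).restrictScalars ℝ)).isPreconnected
  have hfc : AnalyticOnNhd ℂ (f ∘ c) (c ⁻¹' ball x r) :=
    (hf.comp hc.differentiableOn (mapsTo_preimage _ _)).analyticOnNhd hS
  have hgc : AnalyticOnNhd ℂ (g ∘ c) (c ⁻¹' ball x r) :=
    (hg.comp hc.differentiableOn (mapsTo_preimage _ _)).analyticOnNhd hS
  have h0 : c 0 = u := by simp [c]
  have h1 : c 1 = y := by simp [c]
  have h := hfc.eqOn_of_preconnected_of_eventuallyEq hgc hconv (z₀ := 0)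
    (by rwa [mem_preimage, h0])
    (hfg.comp_tendsto (h0 ▸ hc.continuous.tendsto 0))
    (show (1 : ℂ) ∈ c ⁻¹' ball x r by rwa [mem_preimage, h1])
  simpa [h1] using h

theorem DifferentiableOn.eqOn_of_isPreconnected_of_eventuallyEq {f g : V → G} {Ω : Set V} {u : V}
    (hΩ : IsOpen Ω) (hc : IsPreconnected Ω) (hf : DifferentiableOn ℂ f Ω)
    (hg : DifferentiableOn ℂ g Ω) (hu : u ∈ Ω) (hfg : f =ᶠ[𝓝 u] g) : EqOn f g Ω := by
  have h : Ω ⊆ interior {x | f x = g x} := by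
    refine hc.subset_of_closure_inter_subset isOpen_interior
      ⟨u, hu, mem_interior_iff_mem_nhds.2 hfg⟩ ?_
    rintro x ⟨hx, hxΩ⟩
    obtain ⟨r, hr, hb⟩ := Metric.isOpen_iff.1 hΩ x hxΩ
    obtain ⟨v, hv, hvu⟩ := mem_closure_iff.1 hx (ball x r) isOpen_ball (mem_ball_self hr)
    exact mem_interior.2 ⟨ball x r, fun y hy => eqOn_ball_of_eventuallyEq (hf.mono hb)
      (hg.mono hb) hv (mem_interior_iff_mem_nhds.1 hvu) hy, isOpen_ball, mem_ball_self hr⟩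
  exact h.trans interior_subset

end IdentityPrinciple

theorem automorphism_rigidity_k_two
    {n : ℕ} (hn : 2 ≤ n) (Ω : Set (En n)) (ρ : En n → ℝ)
    (hΩ : IsDomain' Ω) (hbd : Bornology.IsBounded Ω)
    (hρ : IsPcxCinfBoundary Ω ρ)
    (p : En n) (hp : p ∈ frontier Ω) (hspc : StronglyPcxAt ρ p)
    (F : En n → En n) (hF : IsAutomorphismOf F Ω)
    (ho : LittleOh Ω F p 2) :
    ∀ z ∈ Ω, F z = z := by
  obtain ⟨hρd, -⟩ := hρ
  obtain ⟨hρs, hρΩ, hρf, hρd⟩ := hρd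
  obtain ⟨hFd, hFΩ, G, hGd, hGΩ, hGF, -⟩ := hF
  have hρp : ρ p = 0 := by rwa [hρf] at hp
  obtain ⟨E, ⟨ν⟩⟩ := exists_siegelNormalForm (hρs.of_le (WithTop.coe_le_coe.2 le_top)) hρΩ hρp
    (hρd p hp) fun ζ hζ h1 h2 => by
      have h := hspc ζ hζ ⟨h1, h2⟩
      simp only [LeviForm, iteratedFDeriv_two_apply, Matrix.cons_val_zero, Matrix.cons_val_one] at h
      linarith
  have htan := fun j =>
    ν.tangentToId_chart (tendsto_iterate_sub_div ν.notMem hFΩ ho j)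
  obtain ⟨U, hUΩ, hU, ⟨u, hu⟩, hUF⟩ :=
    ν.chart.exists_isOpen_eqOn_id hΩ.1 hbd (htan 0) hFd hFΩ hGd hGΩ hGF htan
  exact hFd.eqOn_of_isPreconnected_of_eventuallyEq hΩ.1 hΩ.2.isPreconnected differentiableOn_id
    (hUΩ hu) (eventually_of_mem (hU.mem_nhds hu) hUF)
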